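/- arXiv:1603.02310 — 3 statements merged into one kernel-verified Lean document; each statement's English description precedes it below -/
import Mathlib

section
/- Let G be a connected graph that is {K33+, K5h}-free. If G contains M4 (the Möbius ladder on 8 vertices) as a minor, then G is a minor of M_n for some n ≥ 4. -/
open SimpleGraph

/-- `H` is a minor of `G` (branch-set / model definition). -/
def IsMinor {W V : Type*} (H : SimpleGraph W) (G : SimpleGraph V) : Prop :=
  ∃ B : W → Set V,
    (∀ w, (B w).Nonempty) ∧
    (∀ w, (G.induce (B w)).Connected) ∧
    (Pairwise fun w₁ w₂ => Disjoint (B w₁) (B w₂)) ∧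
    (∀ ⦃w₁ w₂ : W⦄, H.Adj w₁ w₂ → ∃ v₁ ∈ B w₁, ∃ v₂ ∈ B w₂, G.Adj v₁ v₂)

def K5 : SimpleGraph (Fin 5) := ⊤

def K33 : SimpleGraph (Fin 3 ⊕ Fin 3) := completeBipartiteGraph (Fin 3) (Fin 3)

/-- A graph is planar iff it has neither a `K₅` nor a `K₃,₃` minor (Wagner's theorem). -/
def Planar {V : Type*} (G : SimpleGraph V) : Prop := ¬ IsMinor K5 G ∧ ¬ IsMinor K33 G

/-- `G / uw`: contract the edge `uw`, merging `w` into `u` (the vertex `w` becomes isolated). -/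
def contractEdge {V : Type*} (G : SimpleGraph V) (u w : V) : SimpleGraph V :=
  SimpleGraph.fromRel fun a b =>
    a ≠ w ∧ b ≠ w ∧ (G.Adj a b ∨ (a = u ∧ G.Adj w b) ∨ (b = u ∧ G.Adj a w))

/-- A nonplanar graph is almost-planar if for every edge, deletion or contraction is planar. -/
def AlmostPlanar {V : Type*} (G : SimpleGraph V) : Prop :=
  ¬ Planar G ∧ ∀ ⦃u v : V⦄, G.Adj u v →
    (Planar (G.deleteEdges {s(u, v)}) ∨ Planar (contractEdge G u v))

/-- `G` is `k`-connected: more than `k` vertices and deleting fewer than `k` vertices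
leaves a connected graph. -/
def KConnected {V : Type*} (G : SimpleGraph V) (k : ℕ) : Prop :=
  k < Nat.card V ∧ ∀ s : Set V, s.ncard < k → (G.induce (sᶜ)).Connected

/-- `{G[A], G[B]}` is a `k`-separation of `G`. -/
def IsSep {V : Type*} (G : SimpleGraph V) (k : ℕ) (A B : Set V) : Prop :=
  A ∪ B = Set.univ ∧ A ≠ Set.univ ∧ B ≠ Set.univ ∧ (A ∩ B).ncard = k ∧
  ∀ ⦃x y : V⦄, G.Adj x y → (x ∈ A ∧ y ∈ A) ∨ (x ∈ B ∧ y ∈ B)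

/-- The star `K_{1,3}`, with centre `0`. -/
def K13 : SimpleGraph (Fin 4) := SimpleGraph.fromRel fun a _ => a = 0

def InternallyFourConnected {V : Type*} (G : SimpleGraph V) : Prop :=
  KConnected G 3 ∧ 5 ≤ Nat.card V ∧
  ∀ A B : Set V, IsSep G 3 A B →
    Xor' (Nonempty (G.induce A ≃g K13)) (Nonempty (G.induce B ≃g K13))

/-- The wheel `W_n`: a cycle of length `n` plus a hub (`none`) joined to all of it. -/
def wheelGraph (n : ℕ) : SimpleGraph (Option (Fin n)) :=
  SimpleGraph.fromRel fun a b =>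
    match a, b with
    | some i, some j => j.val = (i.val + 1) % n
    | none, some _ => True
    | _, _ => False

def IsWheel {V : Type*} (G : SimpleGraph V) : Prop :=
  ∃ n, 3 ≤ n ∧ Nonempty (G ≃g wheelGraph n)

/-- The double wheel `DW_n`: a cycle of length `n` plus two adjacent hubs joined to all of it. -/
def doubleWheel (n : ℕ) : SimpleGraph (Fin n ⊕ Fin 2) :=
  SimpleGraph.fromRel fun a b =>
    match a, b with
    | .inl i, .inl j => j.val = (i.val + 1) % n
    | .inl _, .inr _ => True
    | .inr _, .inr _ => True
    | _, _ => False

/-- The Möbius ladder `M_n`: a cycle of length `2n` plus all "opposite" chords. -/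
def mobiusLadder (n : ℕ) : SimpleGraph (Fin (2 * n)) :=
  SimpleGraph.fromRel fun i j =>
    j.val = (i.val + 1) % (2 * n) ∨ j.val = (i.val + n) % (2 * n)

/-- `C²_m`: a cycle of length `m` plus all chords between vertices at distance two. -/
def squareCycle (m : ℕ) : SimpleGraph (Fin m) :=
  SimpleGraph.fromRel fun i j =>
    j.val = (i.val + 1) % m ∨ j.val = (i.val + 2) % m

/-- The alternating double wheel `AW_{2n}`: a cycle of length `2n` plus two adjacent hubs,
each joined to alternating cycle vertices. -/
def altDoubleWheel (n : ℕ) : SimpleGraph (Fin (2 * n) ⊕ Fin 2) :=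
  SimpleGraph.fromRel fun a b =>
    match a, b with
    | .inl i, .inl j => j.val = (i.val + 1) % (2 * n)
    | .inl i, .inr k => i.val % 2 = k.val
    | .inr _, .inr _ => True
    | _, _ => False

/-- The class `𝒲`: three wheels glued along a common triangle `V₀`, with no other edges. -/
def InClassW {V : Type*} (G : SimpleGraph V) : Prop :=
  ∃ P : V → Fin 4,
    (P ⁻¹' {0}).ncard = 3 ∧
    (∀ x y : V, P x = 0 → P y = 0 → x ≠ y → G.Adj x y) ∧
    (∀ i : Fin 4, i ≠ 0 → IsWheel (G.induce {v | P v = 0 ∨ P v = i})) ∧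
    (∀ ⦃x y : V⦄, G.Adj x y → ∃ i : Fin 4, i ≠ 0 ∧ (P x = 0 ∨ P x = i) ∧ (P y = 0 ∨ P y = i))

/-- `EX₁`: `K₃,₃` plus a vertex joined to all of one colour class. -/
def EX1 : SimpleGraph (Option (Fin 3 ⊕ Fin 3)) :=
  SimpleGraph.fromRel fun a b =>
    match a, b with
    | some (.inl _), some (.inr _) => True
    | none, some (.inl _) => True
    | _, _ => False

/-- `EX₂`: `K₅` plus a vertex joined to three of its vertices. -/
def EX2 : SimpleGraph (Option (Fin 5)) :=
  SimpleGraph.fromRel fun a b =>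
    match a, b with
    | some i, some j => i ≠ j
    | none, some j => j.val < 3
    | _, _ => False

/-- `EX₈`: `K₃,₃` plus a vertex joined to two vertices of one class and one of the other. -/
def EX8 : SimpleGraph (Option (Fin 3 ⊕ Fin 3)) :=
  SimpleGraph.fromRel fun a b =>
    match a, b with
    | some (.inl _), some (.inr _) => True
    | none, some x => x = Sum.inl 0 ∨ x = Sum.inl 1 ∨ x = Sum.inr 0
    | _, _ => False

/-- `K₅ʰ`: subdivide the edges `01` and `02` of `K₅` and join the two subdivision vertices. -/
def K5h : SimpleGraph (Fin 5 ⊕ Fin 2) :=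
  SimpleGraph.fromRel fun a b =>
    match a, b with
    | .inl i, .inl j =>
        i ≠ j ∧ ¬(i = 0 ∧ j = 1) ∧ ¬(i = 1 ∧ j = 0) ∧ ¬(i = 0 ∧ j = 2) ∧ ¬(i = 2 ∧ j = 0)
    | .inl i, .inr k => (k = 0 ∧ (i = 0 ∨ i = 1)) ∨ (k = 1 ∧ (i = 0 ∨ i = 2))
    | .inr _, .inr _ => True
    | _, _ => False

/-- `K₃,₃ʰ`: subdivide two edges of `K₃,₃` at a common endpoint and join
the two subdivision vertices. -/
def K33h : SimpleGraph ((Fin 3 ⊕ Fin 3) ⊕ Fin 2) :=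
  SimpleGraph.fromRel fun a b =>
    match a, b with
    | .inl (.inl i), .inl (.inr j) => ¬(i = 0 ∧ (j = 0 ∨ j = 1))
    | .inl (.inr j), .inl (.inl i) => ¬(i = 0 ∧ (j = 0 ∨ j = 1))
    | .inl x, .inr k =>
        (k = 0 ∧ (x = Sum.inl 0 ∨ x = Sum.inr 0)) ∨ (k = 1 ∧ (x = Sum.inl 0 ∨ x = Sum.inr 1))
    | .inr _, .inr _ => True
    | _, _ => False

/-- `K₅⁺`: `K₅` plus a pendant vertex. -/
def K5plus : SimpleGraph (Option (Fin 5)) :=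
  SimpleGraph.fromRel fun a b =>
    match a, b with
    | some i, some j => i ≠ j
    | none, some j => j = 0
    | _, _ => False

/-- `K₃,₃⁺`: `K₃,₃` plus a pendant vertex. -/
def K33plus : SimpleGraph (Option (Fin 3 ⊕ Fin 3)) :=
  SimpleGraph.fromRel fun a b =>
    match a, b with
    | some (.inl _), some (.inr _) => True
    | none, some x => x = Sum.inl 0
    | _, _ => False

/-- `K₅ ⊕ e`: disjoint union of `K₅` and one edge. -/
def K5oplus : SimpleGraph (Fin 5 ⊕ Fin 2) :=
  SimpleGraph.fromRel fun a b =>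
    match a, b with
    | .inl i, .inl j => i ≠ j
    | .inr _, .inr _ => True
    | _, _ => False

/-- `K₃,₃ ⊕ e`: disjoint union of `K₃,₃` and one edge. -/
def K33oplus : SimpleGraph ((Fin 3 ⊕ Fin 3) ⊕ Fin 2) :=
  SimpleGraph.fromRel fun a b =>
    match a, b with
    | .inl (.inl _), .inl (.inr _) => True
    | .inr _, .inr _ => True
    | _, _ => False

/-- The triad addition of `H` at `x y z`: add a new vertex joined to `x`, `y`, `z`. -/
def triadAddition {U : Type*} (H : SimpleGraph U) (x y z : U) : SimpleGraph (Option U) :=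
  SimpleGraph.fromRel fun a b =>
    match a, b with
    | some u, some v => H.Adj u v
    | none, some u => u = x ∨ u = y ∨ u = z
    | _, _ => False

def IsTriadAdditionOf {V U : Type*} (G : SimpleGraph V) (H : SimpleGraph U) : Prop :=
  ∃ x y z : U, x ≠ y ∧ y ≠ z ∧ x ≠ z ∧ Nonempty (G ≃g triadAddition H x y z)

/-- `G` is obtained from `H` by subdividing (possibly repeatedly) edges of `H`,
all of which lie in `S`. -/
def IsSubdivisionWithin {V W : Type*} (G : SimpleGraph V) (H : SimpleGraph W)
    (S : Set (Sym2 W)) : Prop :=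
  ∃ (f : W ↪ V) (p : ∀ ⦃u v : W⦄, H.Adj u v → G.Walk (f u) (f v)),
    (∀ ⦃u v : W⦄ (h : H.Adj u v), (p h).IsPath) ∧
    (∀ ⦃u v : W⦄ (h : H.Adj u v), p h.symm = (p h).reverse) ∧
    (∀ ⦃u v : W⦄ (h : H.Adj u v), s(u, v) ∉ S → (p h).length = 1) ∧
    (∀ ⦃u v : W⦄ (h : H.Adj u v) (w : W), f w ∈ (p h).support → w = u ∨ w = v) ∧
    (∀ ⦃u v u' v' : W⦄ (h : H.Adj u v) (h' : H.Adj u' v'), s(u, v) ≠ s(u', v') →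
      ∀ x : V, x ∈ (p h).support → x ∈ (p h').support → x ∈ Set.range f) ∧
    (∀ x : V, x ∈ Set.range f ∨ ∃ (u v : W) (h : H.Adj u v), x ∈ (p h).support) ∧
    (∀ e ∈ G.edgeSet, ∃ (u v : W) (h : H.Adj u v), e ∈ (p h).edges)

/-- `G` is a subdivision of `H`. -/
def IsSubdivision {V W : Type*} (G : SimpleGraph V) (H : SimpleGraph W) : Prop :=
  IsSubdivisionWithin G H Set.univ

/-- `D(H)`: the set of edges of `H` whose deletion leaves a planar graph. -/
def Dset {U : Type*} (H : SimpleGraph U) : Set (Sym2 U) :=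
  {e | e ∈ H.edgeSet ∧ Planar (H.deleteEdges {e})}

/-- `G[A]` together with all edges between vertices of `T` (`T ⊆ A` intended). -/
def deltaGraph {V : Type*} (G : SimpleGraph V) (A T : Set V) : SimpleGraph A :=
  SimpleGraph.fromRel fun a b => G.Adj a.1 b.1 ∨ (a.1 ∈ T ∧ b.1 ∈ T)

/-- `G[A]^Y` for the separation `{G[A], G[B]}`: add a new vertex joined to `A ∩ B`. -/
def sepY {V : Type*} (G : SimpleGraph V) (A B : Set V) : SimpleGraph (Option A) :=
  SimpleGraph.fromRel fun x y =>
    match x, y with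
    | some a, some b => G.Adj a.1 b.1
    | none, some a => a.1 ∈ A ∩ B
    | _, _ => False

/-- `G₂` is obtained from `G` by adding isolated vertices. -/
def AddIsolated {V₂ V : Type*} (G₂ : SimpleGraph V₂) (G : SimpleGraph V) : Prop :=
  ∃ f : V ↪ V₂, (∀ a b : V, G₂.Adj (f a) (f b) ↔ G.Adj a b) ∧
    ∀ x : V₂, x ∉ Set.range f → ∀ y : V₂, ¬ G₂.Adj x y

/-- The set of non-isolated vertices of `G` (so `G* = G.induce (core G)`). -/
def core {V : Type*} (G : SimpleGraph V) : Set V := {v | ∃ w, G.Adj v w}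

/-- `G` is obtained from `G'` by 3-summing wheels onto distinct triangles of `G'`. -/
def SumWheelsOnto {V U : Type*} (G : SimpleGraph V) (G' : SimpleGraph U) : Prop :=
  ∃ (g : U ↪ V) (k : ℕ) (Wp : Fin k → Set V) (T : Fin k → Set U),
    (∀ i, (T i).ncard = 3) ∧
    (∀ i, ∀ x ∈ T i, ∀ y ∈ T i, x ≠ y → G'.Adj x y) ∧
    Function.Injective T ∧
    (∀ i, Disjoint (Wp i) (Set.range ⇑g)) ∧
    (Pairwise fun i j => Disjoint (Wp i) (Wp j)) ∧
    (Set.range ⇑g ∪ ⋃ i, Wp i) = Set.univ ∧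
    (∀ i, IsWheel (deltaGraph G (Wp i ∪ ⇑g '' T i) (⇑g '' T i))) ∧
    (∀ a b : U, G.Adj (g a) (g b) → G'.Adj a b) ∧
    (∀ a b : U, G'.Adj a b → (G.Adj (g a) (g b) ∨ ∃ i, a ∈ T i ∧ b ∈ T i)) ∧
    (∀ ⦃x y : V⦄, G.Adj x y → (x ∈ Set.range ⇑g ∧ y ∈ Set.range ⇑g) ∨
      ∃ i, x ∈ Wp i ∪ ⇑g '' T i ∧ y ∈ Wp i ∪ ⇑g '' T i) ∧
    (∀ i, ∀ x ∈ Wp i, ∀ ⦃y : V⦄, G.Adj x y → y ∈ Wp i ∪ ⇑g '' T i)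

/-- `H` has an edge whose deletion and contraction are both nonplanar. -/
def HasBadEdge {V : Type*} (H : SimpleGraph V) : Prop :=
  ∃ u v : V, H.Adj u v ∧ ¬ Planar (H.deleteEdges {s(u, v)}) ∧ ¬ Planar (contractEdge H u v)

/-! ### Part 1: models -/

/-- Two vertex sets are joined by an edge. -/
def Touch {V : Type*} (G : SimpleGraph V) (A B : Set V) : Prop :=
  ∃ a ∈ A, ∃ b ∈ B, G.Adj a b

theorem Touch.symm {V : Type*} {G : SimpleGraph V} {A B : Set V} (h : Touch G A B) :
    Touch G B A := by
  obtain ⟨a, ha, b, hb, hab⟩ := h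
  exact ⟨b, hb, a, ha, hab.symm⟩

theorem Touch.mono {V : Type*} {G : SimpleGraph V} {A B A' B' : Set V} (h : Touch G A B)
    (hA : A ⊆ A') (hB : B ⊆ B') : Touch G A' B' := by
  obtain ⟨a, ha, b, hb, hab⟩ := h
  exact ⟨a, hA ha, b, hB hb, hab⟩

theorem Touch.conn {V : Type*} {G : SimpleGraph V} {A B : Set V} (h : Touch G A B)
    (hA : (G.induce A).Connected) (hB : (G.induce B).Connected) :
    (G.induce (A ∪ B)).Connected := by
  obtain ⟨a, ha, b, hb, hab⟩ := h
  exact connected_induce_union hA.preconnected hB.preconnected ha hb hab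

/-- A `K₃,₃` model in a connected graph that misses a vertex gives a `K₃,₃⁺` minor. -/
theorem k33_span {V : Type*} {G : SimpleGraph V} (hconn : G.Connected)
    (hfree : ¬ IsMinor K33plus G) (A : Fin 3 ⊕ Fin 3 → Set V)
    (hc : ∀ w, (G.induce (A w)).Connected)
    (hd : Pairwise fun w₁ w₂ => Disjoint (A w₁) (A w₂))
    (ht : ∀ i j, Touch G (A (.inl i)) (A (.inr j))) (v : V) : ∃ w, v ∈ A w := by
  classical
  by_contra hv
  have hne : ∀ w, (A w).Nonempty := fun w => by
    obtain ⟨x⟩ := (hc w).nonempty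
    exact ⟨x.1, x.2⟩
  obtain ⟨z, hz⟩ := hne (.inl 0)
  obtain ⟨p⟩ := hconn.preconnected v z
  obtain ⟨d, -, hd1, hd2⟩ := p.exists_boundary_dart {x | ¬ ∃ w, x ∈ A w} hv
    (by simp only [Set.mem_ofPred_eq, not_not]; exact ⟨_, hz⟩)
  simp only [Set.mem_ofPred_eq, not_not] at hd1 hd2
  obtain ⟨w, hw⟩ := hd2
  have hdadj := d.adj
  have hσ : ∃ σ : Equiv.Perm (Fin 3 ⊕ Fin 3), σ (.inl 0) = w ∧
      ∀ i j, Touch G (A (σ (.inl i))) (A (σ (.inr j))) := by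
    rcases w with i | i
    · refine ⟨Equiv.sumCongr (Equiv.swap 0 i) (Equiv.refl _), by simp, ?_⟩
      intro i j
      exact ht _ _
    · refine ⟨(Equiv.sumCongr (Equiv.swap 0 i) (Equiv.refl _)).trans (Equiv.sumComm _ _),
        by simp, ?_⟩
      intro i j
      exact (ht _ _).symm
  obtain ⟨σ, hσ0, hσ⟩ := hσ
  apply hfree
  refine ⟨fun o => match o with | none => {d.fst} | some s => A (σ s), ?_, ?_, ?_, ?_⟩
  · rintro (_ | s)
    · exact ⟨_, rfl⟩
    · exact hne _
  · rintro (_ | s)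
    · simp
    · exact hc _
  · rintro (_ | s) (_ | s') h
    · exact absurd rfl h
    · simp only [Set.disjoint_singleton_left]
      exact fun h => hd1 ⟨_, h⟩
    · simp only [Set.disjoint_singleton_right]
      exact fun h => hd1 ⟨_, h⟩
    · exact hd (by simpa using h)
  · have key : ∀ s s', (match s, s' with
        | some (.inl _), some (.inr _) => True
        | none, some x => x = Sum.inl 0
        | _, _ => False : Prop) →
        Touch G ((fun o => match o with | none => {d.fst} | some s => A (σ s) :
            Option (Fin 3 ⊕ Fin 3) → Set V) s)
          ((fun o => match o with | none => {d.fst} | some s => A (σ s) :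
            Option (Fin 3 ⊕ Fin 3) → Set V) s') := by
      rintro (_ | s | s) (_ | s' | s') h <;> simp only [reduceCtorEq] at h
      · refine ⟨_, rfl, d.snd, ?_, hdadj⟩
        simp only at h ⊢
        rw [h, hσ0]; exact hw
      · exact hσ _ _
    intro s s' h
    rw [K33plus, SimpleGraph.fromRel_adj] at h
    rcases h.2 with h | h
    · exact key _ _ h
    · exact (key _ _ h).symm

/-- Models of the Möbius ladder `M₄`. -/
structure M4Model {V : Type*} (G : SimpleGraph V) (B : Fin 8 → Set V) : Prop where
  conn : ∀ i, (G.induce (B i)).Connected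
  disj : Pairwise fun i j => Disjoint (B i) (B j)
  rim : ∀ i, Touch G (B i) (B (i + 1))
  rung : ∀ i, Touch G (B i) (B (i + 4))

theorem disj_union {V ι : Type*} {B : ι → Set V} (hB : Pairwise fun i j => Disjoint (B i) (B j))
    {a b c : ι} (h1 : a ≠ c) (h2 : b ≠ c) : Disjoint (B a ∪ B b) (B c) :=
  Set.disjoint_union_left.2 ⟨hB h1, hB h2⟩

theorem six_disj {V : Type*} {A : Fin 3 ⊕ Fin 3 → Set V} (B : Fin 8 → Set V)
    (hB : Pairwise fun i j => Disjoint (B i) (B j)) (F : Fin 3 ⊕ Fin 3 → Finset (Fin 8))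
    (hF : ∀ w w', w ≠ w' → Disjoint (F w) (F w')) (hA : ∀ w, A w ⊆ ⋃ i ∈ F w, B i) :
    Pairwise fun w₁ w₂ => Disjoint (A w₁) (A w₂) := by
  intro w w' h
  refine Disjoint.mono (hA w) (hA w') ?_
  simp only [Set.disjoint_iUnion_left, Set.disjoint_iUnion_right]
  intro i hi j hj
  exact hB fun e => Finset.disjoint_left.1 (hF _ _ h) hj (e ▸ hi)

/-- `M₄` minus a rung: the model must be spanning. -/
theorem m4_minus_span {V : Type*} {G : SimpleGraph V} (hconn : G.Connected)
    (hfree : ¬ IsMinor K33plus G) (B : Fin 8 → Set V)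
    (hc : ∀ i, (G.induce (B i)).Connected)
    (hd : Pairwise fun i j => Disjoint (B i) (B j))
    (hr : ∀ i, Touch G (B i) (B (i + 1)))
    (h1 : Touch G (B 1) (B 5)) (h2 : Touch G (B 2) (B 6)) (h3 : Touch G (B 3) (B 7)) (v : V) :
    ∃ i, v ∈ B i := by
  have h01 := hr 0
  have h12 := hr 1
  have h23 := hr 2
  have h34 := hr 3
  have h45 := hr 4
  have h56 := hr 5
  have h67 := hr 6
  have h70 := hr 7
  simp only [Fin.reduceAdd] at h01 h12 h23 h34 h45 h56 h67 h70
  obtain ⟨w, hw⟩ := k33_span hconn hfree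
    (Sum.elim ![B 0 ∪ B 1, B 3, B 6] ![B 2, B 4 ∪ B 5, B 7])
    (by
      rintro (w | w) <;> fin_cases w
      · exact h01.conn (hc _) (hc _)
      · exact hc _
      · exact hc _
      · exact hc _
      · exact h45.conn (hc _) (hc _)
      · exact hc _)
    (six_disj B hd (Sum.elim ![{0, 1}, {3}, {6}] ![{2}, {4, 5}, {7}]) (by decide)
      (by rintro (w | w) <;> fin_cases w <;> simp))
    (by
      intro i j
      fin_cases i <;> fin_cases j
      · exact h12.mono Set.subset_union_right subset_rfl
      · exact h1.mono Set.subset_union_right Set.subset_union_right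
      · exact h70.symm.mono Set.subset_union_left subset_rfl
      · exact h23.symm
      · exact h34.mono subset_rfl Set.subset_union_left
      · exact h3
      · exact h2.symm
      · exact h56.symm.mono subset_rfl Set.subset_union_right
      · exact h67) v
  rcases w with w | w <;> fin_cases w <;> simp at hw <;> grind

theorem M4Model.rot {V : Type*} {G : SimpleGraph V} {B : Fin 8 → Set V} (h : M4Model G B)
    (k : Fin 8) : M4Model G fun i => B (i + k) where
  conn i := h.conn _
  disj i j hij := h.disj (by simpa using hij)
  rim i := by
    have := h.rim (i + k)
    rwa [add_right_comm] at this
  rung i := by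
    have := h.rung (i + k)
    rwa [add_right_comm] at this

theorem M4Model.span {V : Type*} {G : SimpleGraph V} {B : Fin 8 → Set V} (h : M4Model G B)
    (hconn : G.Connected) (hfree : ¬ IsMinor K33plus G) (v : V) : ∃ i, v ∈ B i :=
  m4_minus_span hconn hfree B h.conn h.disj h.rim (h.rung 1) (h.rung 2) (h.rung 3) v

/-- No chord skipping exactly one rung end. -/
theorem M4Model.no_two {V : Type*} {G : SimpleGraph V} {B : Fin 8 → Set V} (h : M4Model G B)
    (hconn : G.Connected) (hfree : ¬ IsMinor K33plus G) : ¬ Touch G (B 0) (B 2) := by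
  intro ht
  have h23 := h.rim 2
  have h34 := h.rim 3
  have h45 := h.rim 4
  have h56 := h.rim 5
  have h67 := h.rim 6
  have h70 := h.rim 7
  have r0 := h.rung 0
  have r2 := h.rung 2
  have r3 := h.rung 3
  simp only [Fin.reduceAdd, zero_add] at h23 h34 h45 h56 h67 h70 r0 r2 r3
  obtain ⟨⟨v, hv⟩⟩ := (h.conn 1).nonempty
  obtain ⟨w, hw⟩ := k33_span hconn hfree
    (Sum.elim ![B 0, B 3, B 6] ![B 2, B 4 ∪ B 5, B 7])
    (by
      rintro (w | w) <;> fin_cases w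
      · exact h.conn _
      · exact h.conn _
      · exact h.conn _
      · exact h.conn _
      · exact h45.conn (h.conn _) (h.conn _)
      · exact h.conn _)
    (six_disj B h.disj (Sum.elim ![{0}, {3}, {6}] ![{2}, {4, 5}, {7}]) (by decide)
      (by rintro (w | w) <;> fin_cases w <;> simp))
    (by
      intro i j
      fin_cases i <;> fin_cases j
      · exact ht
      · exact r0.mono subset_rfl Set.subset_union_left
      · exact h70.symm
      · exact h23.symm
      · exact h34.mono subset_rfl Set.subset_union_left
      · exact r3
      · exact r2.symm
      · exact h56.symm.mono subset_rfl Set.subset_union_right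
      · exact h67) v
  have hno : ∀ j, j ≠ 1 → v ∉ B j := fun j hj hvj =>
    Set.disjoint_left.1 (h.disj hj) hvj hv
  rcases w with w | w <;> fin_cases w <;> simp at hw
  · exact hno _ (by decide) hw
  · exact hno _ (by decide) hw
  · exact hno _ (by decide) hw
  · exact hno _ (by decide) hw
  · rcases hw with hw | hw
    · exact hno _ (by decide) hw
    · exact hno _ (by decide) hw
  · exact hno _ (by decide) hw

/-- Two parallel long chords give `K₅ʰ`. -/
theorem M4Model.no_par {V : Type*} {G : SimpleGraph V} {B : Fin 8 → Set V} (h : M4Model G B)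
    (hfree : ¬ IsMinor K5h G) (h03 : Touch G (B 0) (B 3)) (h47 : Touch G (B 4) (B 7)) :
    False := by
  have h01 := h.rim 0
  have h12 := h.rim 1
  have h23 := h.rim 2
  have h34 := h.rim 3
  have h45 := h.rim 4
  have h56 := h.rim 5
  have h67 := h.rim 6
  have h70 := h.rim 7
  have r0 := h.rung 0
  have r1 := h.rung 1
  have r2 := h.rung 2
  have r3 := h.rung 3
  simp only [Fin.reduceAdd, zero_add] at h01 h12 h23 h34 h45 h56 h67 h70 r0 r1 r2 r3
  apply hfree
  let A : Fin 5 ⊕ Fin 2 → Set V := Sum.elim ![B 1 ∪ B 5, B 3, B 7, B 0, B 4] ![B 2, B 6]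
  have hc : ∀ w, (G.induce (A w)).Connected := by
    rintro (w | w) <;> fin_cases w
    · exact r1.conn (h.conn _) (h.conn _)
    all_goals exact h.conn _
  refine ⟨A, fun w => ?_, hc, ?_, ?_⟩
  · obtain ⟨x⟩ := (hc w).nonempty
    exact ⟨x.1, x.2⟩
  · let F : Fin 5 ⊕ Fin 2 → Finset (Fin 8) := Sum.elim ![{1, 5}, {3}, {7}, {0}, {4}] ![{2}, {6}]
    have hF : ∀ w w', w ≠ w' → Disjoint (F w) (F w') := by decide
    have hA : ∀ w, A w ⊆ ⋃ i ∈ F w, B i := by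
      rintro (w | w) <;> fin_cases w <;> simp [A, F]
    intro w w' hw
    refine Disjoint.mono (hA w) (hA w') ?_
    simp only [Set.disjoint_iUnion_left, Set.disjoint_iUnion_right]
    intro i hi j hj
    exact h.disj fun e => Finset.disjoint_left.1 (hF _ _ hw) hj (e ▸ hi)
  · have L := @Set.subset_union_left V (B 1) (B 5)
    have R := @Set.subset_union_right V (B 1) (B 5)
    have k01 : Touch G (A (.inl 0)) (A (.inl 3)) := h01.symm.mono L subset_rfl
    have k04 : Touch G (A (.inl 0)) (A (.inl 4)) := h45.symm.mono R subset_rfl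
    have k12 : Touch G (A (.inl 1)) (A (.inl 2)) := r3
    have k13 : Touch G (A (.inl 1)) (A (.inl 3)) := h03.symm
    have k14 : Touch G (A (.inl 1)) (A (.inl 4)) := h34
    have k23 : Touch G (A (.inl 2)) (A (.inl 3)) := h70
    have k24 : Touch G (A (.inl 2)) (A (.inl 4)) := h47.symm
    have k34 : Touch G (A (.inl 3)) (A (.inl 4)) := r0
    have s0 : Touch G (A (.inl 0)) (A (.inr 0)) := h12.mono L subset_rfl
    have s1 : Touch G (A (.inl 1)) (A (.inr 0)) := h23.symm
    have s2 : Touch G (A (.inl 0)) (A (.inr 1)) := h56.mono R subset_rfl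
    have s3 : Touch G (A (.inl 2)) (A (.inr 1)) := h67.symm
    have s4 : Touch G (A (.inr 0)) (A (.inr 1)) := r2
    intro w w' hw
    change Touch G _ _
    rw [K5h, SimpleGraph.fromRel_adj] at hw
    generalize A = A at *
    rcases w with w | w <;> rcases w' with w' | w' <;> fin_cases w <;> fin_cases w' <;>
      simp at hw <;> first | assumption | (apply Touch.symm; assumption)

/-! ### Part 2: Hamiltonian cycles with pairwise crossing rungs -/

theorem conn_Icc {W : Type*} {H : SimpleGraph W} {h : ℤ → W}
    (hadj : ∀ x, H.Adj (h x) (h (x + 1))) {l r : ℤ} (hlr : l ≤ r) :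
    (H.induce (h '' Set.Icc l r)).Connected := by
  induction r, hlr using Int.leInduction with
  | base => rw [Set.Icc_self, Set.image_singleton]; simp
  | succ r hlr ih =>
    have e : h '' Set.Icc l (r + 1) = h '' Set.Icc l r ∪ {h (r + 1)} := by
      rw [← Set.image_singleton, ← Set.image_union]
      congr 1
      ext x
      simp only [Set.mem_Icc, Set.mem_union, Set.mem_singleton_iff]
      omega
    rw [e]
    refine Touch.conn ⟨h r, ⟨r, ⟨hlr, le_rfl⟩, rfl⟩, _, rfl, hadj r⟩ ih ?_
    simp

/-- A cyclic enumeration (lifted to `ℤ`) of the vertices along a Hamiltonian cycle. -/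
structure Ham {V : Type*} (G : SimpleGraph V) (N : ℤ) (v : ℤ → V) : Prop where
  eq_iff : ∀ x y, v x = v y ↔ N ∣ x - y
  surj : ∀ w, ∃ x, v x = w
  adj : ∀ x, G.Adj (v x) (v (x + 1))

theorem Ham.shift {V : Type*} {G : SimpleGraph V} {N : ℤ} {v : ℤ → V} (hv : Ham G N v) (k : ℤ) :
    Ham G N (fun x => v (x + k)) where
  eq_iff x y := by rw [hv.eq_iff]; simp
  surj w := by
    obtain ⟨x, hx⟩ := hv.surj w
    exact ⟨x - k, by simpa using hx⟩
  adj x := by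
    have := hv.adj (x + k)
    rwa [add_right_comm] at this

theorem Ham.add {V : Type*} {G : SimpleGraph V} {N : ℤ} {v : ℤ → V} (hv : Ham G N v) (x : ℤ) :
    v (x + N) = v x := by rw [hv.eq_iff]; simp

theorem Ham.inj {V : Type*} {G : SimpleGraph V} {N : ℤ} {v : ℤ → V} (hv : Ham G N v) {x y : ℤ}
    (h : v x = v y) (h1 : x < y + N) (h2 : y < x + N) : x = y := by
  have h3 := Int.eq_zero_of_abs_lt_dvd ((hv.eq_iff x y).1 h) (by rw [abs_lt]; constructor <;> omega)
  omega

/-- A system of rungs, lifted to `ℤ`. -/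
structure Rungs {V : Type*} (G : SimpleGraph V) (N : ℤ) (v : ℤ → V) (t : ℤ → ℤ) : Prop where
  per : ∀ i, t (i + 8) = t i + N
  lt : ∀ i, t i < t (i + 1)
  adj : ∀ i, G.Adj (v (t i)) (v (t (i + 4)))

theorem Rungs.shift {V : Type*} {G : SimpleGraph V} {N : ℤ} {v : ℤ → V} {t : ℤ → ℤ}
    (h : Rungs G N v t) (k : ℤ) : Rungs G N v (fun i => t (i + k)) where
  per i := by rw [← h.per]; congr 1; ring
  lt i := by
    have := h.lt (i + k)
    rwa [add_right_comm] at this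
  adj i := by
    have := h.adj (i + k)
    rwa [add_right_comm] at this

theorem arcs_model {V : Type*} {G : SimpleGraph V} {N : ℤ} {v : ℤ → V} {t : ℤ → ℤ}
    (hv : Ham G N v) (ht : Rungs G N v t) (l r : Fin 8 → ℤ)
    (hl : ∀ i : Fin 8, l i ≤ t i.val) (hr : ∀ i : Fin 8, t i.val ≤ r i)
    (hlr : ∀ i j : Fin 8, i < j → r i < l j) (hlast : r 7 < l 0 + N)
    (hadj : ∀ i : Fin 8, G.Adj (v (r i)) (v (l (i + 1)))) :
    M4Model G (fun i => v '' Set.Icc (l i) (r i)) where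
  conn i := conn_Icc hv.adj ((hl i).trans (hr i))
  disj := by
    have hr7 : ∀ i, r i ≤ r 7 := by
      intro i
      rcases eq_or_ne i 7 with h | h
      · rw [h]
      · have := hlr i 7 (by omega)
        have := hl 7
        have := hr 7
        omega
    have hl0 : ∀ i, l 0 ≤ l i := by
      intro i
      rcases eq_or_ne i 0 with h | h
      · rw [h]
      · have := hlr 0 i (by omega)
        have := hl 0
        have := hr 0
        omega
    intro i j hij
    rw [Set.disjoint_left]
    rintro _ ⟨x, ⟨hx1, hx2⟩, rfl⟩ ⟨y, ⟨hy1, hy2⟩, hxy⟩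
    have a1 := hr7 i
    have a2 := hr7 j
    have a3 := hl0 i
    have a4 := hl0 j
    have := hv.inj hxy (by omega) (by omega)
    rcases lt_or_gt_of_ne hij with h | h
    · have := hlr _ _ h
      omega
    · have := hlr _ _ h
      omega
  rim i := ⟨_, ⟨r i, ⟨(hl i).trans (hr i), le_rfl⟩, rfl⟩, _,
    ⟨l (i + 1), ⟨le_rfl, (hl _).trans (hr _)⟩, rfl⟩, hadj i⟩
  rung i := by
    refine ⟨_, ⟨t i.val, ⟨hl i, hr i⟩, rfl⟩, _, ⟨t (i + 4).val, ⟨hl _, hr _⟩, rfl⟩, ?_⟩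
    by_cases h : i.val < 4
    · have e : ((i + 4 : Fin 8).val : ℤ) = i.val + 4 := by
        have : (i + 4 : Fin 8).val = i.val + 4 := by
          rw [Fin.val_add]; change (i.val + 4) % 8 = _; omega
        rw [this]; simp
      rw [e]
      exact ht.adj _
    · have e : (i.val : ℤ) = ((i + 4 : Fin 8).val : ℤ) + 4 := by
        have : i.val = (i + 4 : Fin 8).val + 4 := by
          rw [Fin.val_add]; change _ = (i.val + 4) % 8 + 4; omega
        omega
      rw [e]
      exact (ht.adj _).symm

/-- The model obtained by cutting the cycle into eight arcs. -/
theorem cuts_model {V : Type*} {G : SimpleGraph V} {N : ℤ} {v : ℤ → V} {t : ℤ → ℤ}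
    (hv : Ham G N v) (ht : Rungs G N v t) (s : ℕ → ℤ)
    (h1 : ∀ i, i < 8 → s i ≤ t i) (h2 : ∀ i : ℕ, i < 8 → t i < s (i + 1)) (h3 : s 8 = s 0 + N) :
    M4Model G (fun i : Fin 8 => v '' Set.Icc (s i.val) (s (i.val + 1) - 1)) := by
  have mono : ∀ j, j ≤ 8 → ∀ i, i < j → s (i + 1) ≤ s j := by
    intro j
    induction j with
    | zero => intro _ i hi; omega
    | succ j ih =>
      intro hj i hi
      rcases Nat.lt_succ_iff_lt_or_eq.1 hi with h | h
      · have := ih (by omega) i h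
        have := h1 j (by omega)
        have := h2 j (by omega)
        omega
      · rw [h]
  refine arcs_model hv ht (fun i => s i.val) (fun i => s (i.val + 1) - 1) (fun i => h1 _ i.2)
    (fun i => ?_) (fun i j hij => ?_) ?_ (fun i => ?_)
  · have := h2 _ i.2
    omega
  · have := mono j.val (by omega) i.val hij
    omega
  · change s 8 - 1 < s 0 + N
    omega
  · by_cases h : i.val < 7
    · have : (i + 1 : Fin 8).val = i.val + 1 := by
        rw [Fin.val_add]; change (i.val + 1) % 8 = _; omega
      rw [this]
      have := hv.adj (s (i.val + 1) - 1)
      simpa using this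
    · have h7 : i = 7 := by omega
      subst h7
      have := hv.adj (s 8 - 1)
      rw [sub_add_cancel, h3, hv.add] at this
      change G.Adj (v (s 8 - 1)) (v (s 0))
      rw [h3]
      exact this

theorem chord_aux {V : Type*} {G : SimpleGraph V} {N : ℤ} {v : ℤ → V} {t : ℤ → ℤ}
    (hconn : G.Connected) (hfree : ¬ IsMinor K33plus G)
    (hv : Ham G N v) (ht : Rungs G N v t) {a b : ℤ} (ha1 : t (-1) < a) (ha2 : a ≤ t 0)
    (hab : a + 2 ≤ b) (hadj : G.Adj (v a) (v b)) : t 3 ≤ b := by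
  by_contra hb
  have l0 := ht.lt 0
  have l1 := ht.lt 1
  have l2 := ht.lt 2
  have l3 := ht.lt 3
  have l4 := ht.lt 4
  have l5 := ht.lt 5
  have l6 := ht.lt 6
  have p7 := ht.per (-1)
  have p8 := ht.per 0
  have l7 := ht.lt 7
  norm_num at l0 l1 l2 l3 l4 l5 l6 l7 p7 p8
  have miss : ∀ l r : Fin 8 → ℤ, M4Model G (fun i => v '' Set.Icc (l i) (r i)) →
      (∀ i, a ≤ l i ∧ r i ≤ a + N ∧ (r i < a + 1 ∨ a + 1 < l i)) → False := by
    intro l r hm h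
    obtain ⟨i, x, hx, e⟩ := hm.span hconn hfree (v (a + 1))
    obtain ⟨h1, h2, h3⟩ := h i
    rw [Set.mem_Icc] at hx
    have := hv.inj e (by omega) (by omega)
    omega
  rcases lt_or_ge (t 1) b with h1 | h1
  · -- chord from arc 0 to arc 2
    have M := cuts_model hv ht
      (fun i => if i = 0 then a else if i = 1 then t 0 + 1 else if i = 2 then t 1 + 1 else
        if i = 8 then a + N else t i)
      (by intro i hi; interval_cases i <;> simp <;> omega)
      (by intro i hi; interval_cases i <;> simp <;> omega) (by simp)
    refine M.no_two hconn hfree ⟨_, ⟨a, ?_, rfl⟩, _, ⟨b, ?_, rfl⟩, hadj⟩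
    · simp; omega
    · simp; omega
  rcases lt_or_ge (t 0) b with h0 | h0
  · rcases lt_or_ge a (t 0) with h | h
    · have ht' := ht.shift (-1)
      have M := cuts_model hv ht'
        (fun i => if i = 2 then t 0 + 1 else t (i + -1))
        (by intro i hi; interval_cases i <;> simp; omega)
        (by intro i hi; interval_cases i <;> simp <;> omega)
        (by simp; omega)
      refine M.no_two hconn hfree ⟨_, ⟨a, ?_, rfl⟩, _, ⟨b, ?_, rfl⟩, hadj⟩
      · simp; omega
      · simp; omega
    · have ea : a = t 0 := by omega
      refine miss ![a, b, t 2, t 3, t 4, t 5, t 6, t 7]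
        ![a, t 2 - 1, t 3 - 1, t 4 - 1, t 5 - 1, t 6 - 1, t 7 - 1, a + N - 1]
        (arcs_model hv ht _ _ ?_ ?_ ?_ ?_ ?_) ?_
      · intro i; fin_cases i <;> simp <;> omega
      · intro i; fin_cases i <;> simp <;> omega
      · intro i j hij; fin_cases i <;> fin_cases j <;> simp at hij ⊢ <;> omega
      · simp
      · have k := fun x => hv.adj (x - 1)
        simp only [sub_add_cancel] at k
        intro i; fin_cases i <;> simp
        · exact hadj
        all_goals first | exact k _ | skip
        rw [← hv.add a]
        exact k _
      · intro i; fin_cases i <;> simp <;> omega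
  · refine miss ![b, t 1, t 2, t 3, t 4, t 5, t 6, t 7]
      ![t 1 - 1, t 2 - 1, t 3 - 1, t 4 - 1, t 5 - 1, t 6 - 1, t 7 - 1, a + N]
      (arcs_model hv ht _ _ ?_ ?_ ?_ ?_ ?_) ?_
    · intro i; fin_cases i <;> simp; omega
    · intro i; fin_cases i <;> simp <;> omega
    · intro i j hij; fin_cases i <;> fin_cases j <;> simp at hij ⊢ <;> omega
    · simp; omega
    · have k := fun x => hv.adj (x - 1)
      simp only [sub_add_cancel] at k
      intro i; fin_cases i <;> simp
      all_goals first | exact k _ | skip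
      rw [hv.add a]
      exact hadj
    · intro i; fin_cases i <;> simp <;> omega

theorem chord_long {V : Type*} {G : SimpleGraph V} {N : ℤ} {v : ℤ → V} {t : ℤ → ℤ}
    (hconn : G.Connected) (hfree : ¬ IsMinor K33plus G)
    (hv : Ham G N v) (ht : Rungs G N v t) {a b : ℤ}
    (hab : a + 2 ≤ b) (hadj : G.Adj (v a) (v b)) :
    ∃ i, t (i - 1) < a ∧ a ≤ t i ∧ t (i + 3) ≤ b := by
  have up : ∀ n : ℕ, t 0 + n ≤ t n := by
    intro n
    induction n with
    | zero => simp
    | succ n ih => have := ht.lt n; push_cast; omega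
  have dn : ∀ n : ℕ, t (-n) ≤ t 0 - n := by
    intro n
    induction n with
    | zero => simp
    | succ n ih =>
      have := ht.lt (-n - 1)
      rw [sub_add_cancel] at this
      push_cast
      rw [neg_add']
      omega
  obtain ⟨i, hi, hmin⟩ := Int.exists_least_of_bdd (P := fun i => a ≤ t i)
    ⟨min 0 (a - t 0), by
      intro z hz
      by_contra hlt
      rcases le_total 0 z with h | h
      · omega
      · obtain ⟨n, hn⟩ := Int.eq_ofNat_of_zero_le (neg_nonneg.2 h)
        have := dn n
        rw [← hn, neg_neg] at this
        omega⟩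
    ⟨(a - t 0).toNat, by have := up (a - t 0).toNat; omega⟩
  have h1 : t (i - 1) < a := by
    by_contra h
    have := hmin (i - 1) (by omega)
    omega
  have := chord_aux hconn hfree hv (ht.shift i) (a := a) (b := b)
    (by rw [neg_add_eq_sub]; exact h1) (by simpa using hi) hab hadj
  exact ⟨i, h1, hi, by rwa [add_comm] at this⟩

theorem no_parallel {V : Type*} {G : SimpleGraph V} {N : ℤ} {v : ℤ → V} {t : ℤ → ℤ}
    (hconn : G.Connected) (hfree : ¬ IsMinor K33plus G) (hfree' : ¬ IsMinor K5h G)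
    (hv : Ham G N v) (ht : Rungs G N v t) {a b c d : ℤ}
    (hab : a + 2 ≤ b) (h1 : G.Adj (v a) (v b)) (hbc : b < c) (hcd : c + 2 ≤ d)
    (h2 : G.Adj (v c) (v d)) (hda : d < a + N) : False := by
  obtain ⟨i, hi1, hi2, hi3⟩ := chord_long hconn hfree hv ht hab h1
  obtain ⟨j, hj1, hj2, hj3⟩ := chord_long hconn hfree hv ht hcd h2
  have mono : StrictMono t := strictMono_int_of_lt_succ ht.lt
  have hj4 : i + 3 < j := mono.lt_iff_lt.1 (by omega)
  have hp := ht.per i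
  have hj5 : j + 3 < i + 8 := mono.lt_iff_lt.1 (by omega)
  obtain rfl : j = i + 4 := by omega
  have ht' := ht.shift i
  have M := cuts_model hv ht'
    (fun k => if k = 0 then a else if k = 4 then c else if k = 8 then a + N else t (k + i))
    (by
      intro k hk
      interval_cases k <;> simp
      · exact hi2
      · rwa [add_comm] at hj2)
    (by
      have q3 : t (3 + i) < c := by rw [add_comm]; omega
      have q7 : t (7 + i) < a + N := by
        have := ht.per (i - 1)
        have e : i - 1 + 8 = 7 + i := by ring
        rw [e] at this
        omega
      intro k hk
      interval_cases k <;> simp <;> first | exact q3 | exact q7 | (apply mono; omega))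
    (by simp)
  have q0 := mono (show i < 1 + i by omega)
  have q5 := mono (show i + 4 < 5 + i by omega)
  have e3 : i + 3 = 3 + i := by ring
  have e7 : i + 4 + 3 = 7 + i := by ring
  rw [e3] at hi3
  rw [e7] at hj3
  refine M.no_par hfree' ⟨_, ⟨a, ?_, rfl⟩, _, ⟨b, ?_, rfl⟩, h1⟩
    ⟨_, ⟨c, ?_, rfl⟩, _, ⟨d, ?_, rfl⟩, h2⟩ <;> simp <;> omega

/-! ### Part 3: embedding into a Möbius ladder -/

theorem staircase (k : ℕ) : ∀ (a b c d : ℤ) (S : Set (ℤ × ℤ)), a ≤ c → b ≤ d →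
    (c - a) + (d - b) = k →
    (∀ s ∈ S, a ≤ s.1 ∧ s.1 ≤ c ∧ b ≤ s.2 ∧ s.2 ≤ d) →
    (∀ s ∈ S, ∀ s' ∈ S, ¬ (s.1 < s'.1 ∧ s'.2 < s.2)) →
    ∃ p q : ℕ → ℤ, p 0 = a ∧ q 0 = b ∧ p k = c ∧ q k = d ∧
      (∀ i, i < k → (p (i + 1) = p i + 1 ∧ q (i + 1) = q i) ∨
        (p (i + 1) = p i ∧ q (i + 1) = q i + 1)) ∧
      ∀ s ∈ S, ∃ i, i ≤ k ∧ p i = s.1 ∧ q i = s.2 := by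
  induction k with
  | zero =>
    intro a b c d S h1 h2 h3 h4 h5
    refine ⟨fun _ => a, fun _ => b, rfl, rfl, ?_, ?_, ?_, ?_⟩
    · push_cast at h3; change a = c; omega
    · push_cast at h3; change b = d; omega
    · intro i hi; omega
    · intro s hs
      have := h4 s hs
      push_cast at h3
      exact ⟨0, le_rfl, by change a = s.1; omega, by change b = s.2; omega⟩
  | succ k ih =>
    intro a b c d S h1 h2 h3 h4 h5
    push_cast at h3
    by_cases hR : a < c ∧ ∀ s ∈ S, s.1 = a → s.2 = b
    · obtain ⟨p, q, e1, e2, e3, e4, e5, e6⟩ := ih (a + 1) b c d {s ∈ S | a + 1 ≤ s.1}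
        (by omega) h2 (by omega)
        (fun s hs => ⟨hs.2, (h4 s hs.1).2⟩)
        (fun s hs s' hs' => h5 s hs.1 s' hs'.1)
      refine ⟨fun i => if i = 0 then a else p (i - 1), fun i => if i = 0 then b else q (i - 1),
        by simp, by simp, by simpa using e3, by simpa using e4, ?_, ?_⟩
      · intro i hi
        rcases i with _ | i
        · simp [e1, e2]
        · simpa using e5 i (by omega)
      · intro s hs
        by_cases hsa : s.1 = a
        · exact ⟨0, by omega, by simp [hsa], by simp [hR.2 s hs hsa]⟩
        · have := h4 s hs
          obtain ⟨i, hi, hi'⟩ := e6 s ⟨hs, by omega⟩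
          exact ⟨i + 1, by omega, by simpa using hi'⟩
    · have hS : ∀ s ∈ S, s.2 = b → s.1 = a := by
        intro s hs hb
        by_contra hne
        have g1 := h4 s hs
        apply hR
        refine ⟨by omega, fun s' hs' ha => ?_⟩
        have g2 := h4 s' hs'
        have g3 := h5 s' hs' s hs
        omega
      have hbd : b < d := by
        by_contra hbd
        apply hR
        refine ⟨by omega, fun s' hs' ha => ?_⟩
        have g2 := h4 s' hs'
        omega
      obtain ⟨p, q, e1, e2, e3, e4, e5, e6⟩ := ih a (b + 1) c d {s ∈ S | b + 1 ≤ s.2}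
        h1 (by omega) (by omega)
        (fun s hs => ⟨(h4 s hs.1).1, (h4 s hs.1).2.1, hs.2, (h4 s hs.1).2.2.2⟩)
        (fun s hs s' hs' => h5 s hs.1 s' hs'.1)
      refine ⟨fun i => if i = 0 then a else p (i - 1), fun i => if i = 0 then b else q (i - 1),
        by simp, by simp, by simpa using e3, by simpa using e4, ?_, ?_⟩
      · intro i hi
        rcases i with _ | i
        · simp [e1, e2]
        · simpa using e5 i (by omega)
      · intro s hs
        by_cases hsb : s.2 = b
        · exact ⟨0, by omega, by simp [hS s hs hsb], by simp [hsb]⟩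
        · have := h4 s hs
          obtain ⟨i, hi, hi'⟩ := e6 s ⟨hs, by omega⟩
          exact ⟨i + 1, by omega, by simpa using hi'⟩

/-- Discrete intermediate value: a unit-step nondecreasing sequence takes each step. -/
theorem unit_step {g : ℕ → ℤ} {K : ℕ}
    (hg : ∀ x, x < K → g (x + 1) = g x ∨ g (x + 1) = g x + 1) {u : ℤ} (h0 : g 0 ≤ u)
    (h1 : u < g K) : ∃ x, x < K ∧ g x = u ∧ g (x + 1) = u + 1 := by
  induction K with
  | zero => omega
  | succ K ih =>
    by_cases h : u < g K
    · obtain ⟨x, hx, h⟩ := ih (fun x hx => hg x (by omega)) h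
      exact ⟨x, by omega, h⟩
    · have := hg K (by omega)
      exact ⟨K, by omega, by omega, by omega⟩

theorem step_mono {g : ℕ → ℤ} {K : ℕ}
    (hg : ∀ x, x < K → g (x + 1) = g x ∨ g (x + 1) = g x + 1) {x y : ℕ} (hxy : x ≤ y)
    (hy : y ≤ K) : g x ≤ g y := by
  induction y, hxy using Nat.le_induction with
  | base => rfl
  | succ y hxy ih =>
    have := hg y (by omega)
    have := ih (by omega)
    omega

theorem ladder_rim {n : ℕ} (hn : 2 ≤ n) (x : ℕ) (h1 : x % (2 * n) < 2 * n)
    (h2 : (x + 1) % (2 * n) < 2 * n) :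
    (mobiusLadder n).Adj ⟨x % (2 * n), h1⟩ ⟨(x + 1) % (2 * n), h2⟩ := by
  rw [mobiusLadder, SimpleGraph.fromRel_adj]
  refine ⟨?_, Or.inl (Or.inl ?_)⟩
  · intro h
    rw [Fin.mk.injEq] at h
    have : x ≡ x + 1 [MOD 2 * n] := h
    have h3 := (Nat.modEq_iff_dvd' (by omega)).1 this
    have := Nat.le_of_dvd (by omega) h3
    omega
  · simp [Nat.mod_add_mod]

theorem ladder_rung {n x : ℕ} (hx : x < n) :
    (mobiusLadder n).Adj ⟨x, by omega⟩ ⟨x + n, by omega⟩ := by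
  rw [mobiusLadder, SimpleGraph.fromRel_adj]
  refine ⟨?_, Or.inl (Or.inr ?_)⟩
  · intro h
    rw [Fin.mk.injEq] at h
    omega
  · simp only
    rw [Nat.mod_eq_of_lt]
    omega

theorem conn_ladder {n : ℕ} (hn : 2 ≤ n) (hpos : ∀ x, x % (2 * n) < 2 * n) {l r : ℕ}
    (hlr : l ≤ r) :
    ((mobiusLadder n).induce ((fun x => (⟨x % (2 * n), hpos x⟩ : Fin (2 * n))) ''
      Set.Icc l r)).Connected := by
  induction r, hlr using Nat.le_induction with
  | base => rw [Set.Icc_self, Set.image_singleton]; simp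
  | succ r hlr ih =>
    have e : (fun x => (⟨x % (2 * n), hpos x⟩ : Fin (2 * n))) '' Set.Icc l (r + 1) =
        (fun x => (⟨x % (2 * n), hpos x⟩ : Fin (2 * n))) '' Set.Icc l r ∪
          {⟨(r + 1) % (2 * n), hpos _⟩} := by
      ext y
      simp only [Set.mem_image, Set.mem_Icc, Set.mem_union, Set.mem_singleton_iff]
      constructor
      · rintro ⟨x, hx, rfl⟩
        by_cases h : x = r + 1
        · right; rw [h]
        · left; exact ⟨x, by omega, rfl⟩
      · rintro (⟨x, hx, rfl⟩ | rfl)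
        · exact ⟨x, by omega, rfl⟩
        · exact ⟨r + 1, by omega, rfl⟩
    rw [e]
    refine Touch.conn ⟨_, ⟨r, ⟨hlr, le_rfl⟩, rfl⟩, _, rfl, ladder_rim hn r _ _⟩ ih ?_
    simp

theorem embed_ladder {V : Type*} {G : SimpleGraph V} {n : ℕ} {v : ℤ → V} (hn : 4 ≤ n)
    (hv : Ham G n v) {m : ℤ} (hm1 : 2 ≤ m) (hm2 : m + 2 ≤ n) (hm : G.Adj (v 0) (v m))
    (hpar : ∀ a b c d : ℤ, a + 2 ≤ b → G.Adj (v a) (v b) → b < c → c + 2 ≤ d →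
      G.Adj (v c) (v d) → d < a + n → False) : IsMinor G (mobiusLadder n) := by
  classical
  have vN : v n = v 0 := by simpa using hv.add 0
  obtain ⟨p, q, p0, q0, pn, qn, hstep, hS⟩ := staircase n 0 m m n
    {s | (0 ≤ s.1 ∧ s.1 ≤ m ∧ m ≤ s.2 ∧ s.2 ≤ n) ∧ s.1 + 2 ≤ s.2 ∧ s.2 + 2 ≤ s.1 + n ∧
      G.Adj (v s.1) (v s.2)} (by omega) (by omega) (by omega) (fun s hs => hs.1)
    (by
      rintro ⟨u, w⟩ ⟨h1, h2, h3, h4⟩ ⟨u', w'⟩ ⟨h1', h2', h3', h4'⟩ ⟨h5, h6⟩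
      simp only at *
      refine hpar u' w' w (u + n) h2' h4' h6 h3 ?_ (by omega)
      rw [hv.add]
      exact h4.symm)
  -- the label function along the rim
  let g : ℕ → ℤ := fun x => if x ≤ n then p x else if x ≤ 2 * n then q (x - n)
    else n + p (x - 2 * n)
  have g1 : ∀ x, x ≤ n → g x = p x := fun x hx => by simp [g, hx]
  have g2 : ∀ x, n ≤ x → x ≤ 2 * n → g x = q (x - n) := by
    intro x h1 h2
    rcases h1.eq_or_lt with rfl | h
    · simp [g, pn, q0]
    · simp [g, not_le.2 h, h2]
  have g3 : ∀ x, 2 * n ≤ x → g x = n + p (x - 2 * n) := by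
    intro x h1
    rcases h1.eq_or_lt with rfl | h
    · rw [g2 _ (by omega) le_rfl]
      have : 2 * n - n = n := by omega
      rw [this, qn]; simp [p0]
    · have : ¬ x ≤ n := by omega
      simp [g, not_le.2 h, this]
  have gstep : ∀ x, x < 3 * n → g (x + 1) = g x ∨ g (x + 1) = g x + 1 := by
    intro x hx
    rcases lt_or_ge x n with h | h
    · rw [g1 x (by omega), g1 (x + 1) (by omega)]
      have := hstep x h
      omega
    rcases lt_or_ge x (2 * n) with h' | h'
    · rw [g2 x (by omega) (by omega), g2 (x + 1) (by omega) (by omega)]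
      have := hstep (x - n) (by omega)
      have e : x + 1 - n = x - n + 1 := by omega
      rw [e]
      omega
    · rw [g3 x (by omega), g3 (x + 1) (by omega)]
      have := hstep (x - 2 * n) (by omega)
      have e : x + 1 - 2 * n = x - 2 * n + 1 := by omega
      rw [e]
      omega
  have g0 : g 0 = 0 := by rw [g1 0 (by omega), p0]
  have gn : g n = m := by rw [g1 n le_rfl, pn]
  have g2n : g (2 * n) = n := by rw [g3 _ le_rfl]; simp [p0]
  have g3n : g (3 * n) = n + m := by
    have e : 3 * n - 2 * n = n := by omega
    rw [g3 _ (by omega), e, pn]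
  have gper : ∀ x, x ≤ n → g (x + 2 * n) = g x + n := by
    intro x hx
    rw [g3 _ (by omega), g1 x hx, Nat.add_sub_cancel]; ring
  have gmod : ∀ x, x ≤ 3 * n → v (g (x % (2 * n))) = v (g x) := by
    intro x hx
    rcases lt_or_ge x (2 * n) with h | h
    · rw [Nat.mod_eq_of_lt h]
    · obtain ⟨y, rfl⟩ := Nat.exists_eq_add_of_le' h
      rw [Nat.add_mod_right, Nat.mod_eq_of_lt (by omega), gper y (by omega), hv.add]
  have hpos : ∀ x, x % (2 * n) < 2 * n := fun x => Nat.mod_lt _ (by omega)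
  -- canonical positions
  have canon : ∀ w : V, ∃ u : ℤ, 0 ≤ u ∧ u < n ∧ v u = w := by
    intro w
    obtain ⟨x, rfl⟩ := hv.surj w
    refine ⟨x % n, Int.emod_nonneg _ (by omega), Int.emod_lt_of_pos _ (by omega), ?_⟩
    rw [hv.eq_iff]
    exact (Int.dvd_self_sub_emod).neg_right.trans (by rw [neg_sub])
  have hc : ∀ w : V, ((mobiusLadder n).induce {y : Fin (2 * n) | v (g y.val) = w}).Connected := by
    intro w
    have canon' : ∃ u : ℤ, 1 ≤ u ∧ u ≤ n ∧ v u = w := by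
      obtain ⟨u, h1, h2, h3⟩ := canon w
      rcases h1.eq_or_lt with rfl | h
      · exact ⟨n, by omega, le_rfl, by rw [vN, h3]⟩
      · exact ⟨u, by omega, by omega, h3⟩
    obtain ⟨u, hu1, hu2, hu3⟩ := canon'
    obtain ⟨r, hr, hr1, hr2⟩ := unit_step gstep (u := u) (by omega) (by omega)
    obtain ⟨l, hl, hl1, hl2⟩ := unit_step gstep (u := u - 1) (by omega) (by omega)
    have hlr : l + 1 ≤ r := by
      by_contra hlt
      have := step_mono gstep (x := r) (y := l) (by omega) (by omega)
      omega
    have e : {y : Fin (2 * n) | v (g y.val) = w} =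
        (fun x => (⟨x % (2 * n), hpos x⟩ : Fin (2 * n))) '' Set.Icc (l + 1) r := by
      have iff : ∀ x, x ≤ 3 * n → g x = u → x ∈ Set.Icc (l + 1) r := by
        intro x hx hgx
        rw [Set.mem_Icc]
        constructor
        · by_contra hlt
          have := step_mono gstep (x := x) (y := l) (by omega) (by omega)
          omega
        · by_contra hlt
          have := step_mono gstep (x := r + 1) (y := x) (by omega) (by omega)
          omega
      ext y
      constructor
      · intro hy
        have hy : v (g y.val) = w := hy
        have hy2 := y.2
        have b1 := step_mono gstep (x := 0) (y := y.val) (by omega) (by omega)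
        have b2 := step_mono gstep (x := y.val) (y := 2 * n) (by omega) (by omega)
        by_cases h0 : g y.val = 0
        · have hun : u = n := by
            refine hv.inj (hu3.trans ?_) (by omega) (by omega)
            rw [vN, ← h0, hy]
          have hyn : y.val ≤ n := by
            by_contra hlt
            have := step_mono gstep (x := n) (y := y.val) (by omega) (by omega)
            omega
          refine ⟨y.val + 2 * n, iff _ (by omega) (by rw [gper _ hyn]; omega), ?_⟩
          ext
          simp [Nat.mod_eq_of_lt hy2]
        · refine ⟨y.val, iff _ (by omega) (hv.inj (hy.trans hu3.symm) (by omega) (by omega)), ?_⟩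
          ext
          simp [Nat.mod_eq_of_lt hy2]
      · rintro ⟨x, ⟨hx1, hx2⟩, rfl⟩
        change v (g (x % (2 * n))) = w
        rw [gmod x (by omega), ← hu3]
        congr 1
        have := step_mono gstep (x := l + 1) (y := x) (by omega) (by omega)
        have := step_mono gstep (x := x) (y := r) (by omega) (by omega)
        omega
    rw [e]
    exact conn_ladder (by omega) hpos hlr
  let B : V → Set (Fin (2 * n)) := fun w => {y : Fin (2 * n) | v (g y.val) = w}
  -- rim edges
  have rim : ∀ u : ℤ, 0 ≤ u → u < n → Touch (mobiusLadder n) (B (v u)) (B (v (u + 1))) := by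
    intro u h1 h2
    obtain ⟨x, hx, hx1, hx2⟩ := unit_step (K := 2 * n) (fun x hx => gstep x (by omega))
      (u := u) (by omega) (by omega)
    refine ⟨_, ?_, _, ?_, ladder_rim (by omega) x (hpos _) (hpos _)⟩
    · change v (g (x % (2 * n))) = v u
      rw [gmod x (by omega), hx1]
    · change v (g ((x + 1) % (2 * n))) = v (u + 1)
      rw [gmod (x + 1) (by omega), hx2]
  -- chords
  have chord : ∀ u w : ℤ, (0 ≤ u ∧ u ≤ m ∧ m ≤ w ∧ w ≤ n) → u + 2 ≤ w → w + 2 ≤ u + n →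
      G.Adj (v u) (v w) → Touch (mobiusLadder n) (B (v u)) (B (v w)) := by
    intro u w h1 h2 h3 h4
    obtain ⟨i, hi, hi1, hi2⟩ := hS (u, w) ⟨h1, h2, h3, h4⟩
    simp only at hi1 hi2
    rcases hi.eq_or_lt with rfl | hi
    · refine Touch.symm ⟨_, ?_, _, ?_, ladder_rung (x := 0) (by omega)⟩
      · change v (g 0) = v w
        rw [g0, ← hi2, qn, vN]
      · change v (g (0 + i)) = v u
        rw [zero_add, gn, ← hi1, pn]
    · refine ⟨_, ?_, _, ?_, ladder_rung hi⟩
      · change v (g i) = v u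
        rw [g1 i hi.le, hi1]
      · change v (g (i + n)) = v w
        rw [g2 _ (by omega) (by omega), Nat.add_sub_cancel, hi2]
  have main : ∀ x y : ℤ, 0 ≤ x → x < y → y < n → G.Adj (v x) (v y) →
      Touch (mobiusLadder n) (B (v x)) (B (v y)) := by
    intro x y h0 hxy hyn hadj
    by_cases c1 : y = x + 1
    · subst c1
      exact rim x h0 (by omega)
    by_cases c2 : x = 0 ∧ y + 1 = n
    · have := rim y (by omega) hyn
      rw [c2.2, vN] at this
      rw [c2.1]
      exact this.symm
    by_cases c3 : x ≤ m ∧ m ≤ y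
    · exact chord x y (by omega) (by omega) (by omega) hadj
    by_cases c4 : y < m
    · rcases h0.eq_or_lt with rfl | h
      · have := chord y n (by omega) (by omega) (by omega) (by rw [vN]; exact hadj.symm)
        rw [vN] at this
        exact this.symm
      · exact (hpar x y m n (by omega) hadj c4 (by omega) (by rw [vN]; exact hm.symm)
          (by omega)).elim
    · exact (hpar 0 m x y (by omega) hm (by omega) (by omega) hadj (by omega)).elim
  refine ⟨B, fun w => ?_, hc, ?_, ?_⟩
  · obtain ⟨x⟩ := (hc w).nonempty
    exact ⟨x.1, x.2⟩
  · intro w w' h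
    rw [Set.disjoint_left]
    intro y hy hy'
    exact h (hy.symm.trans hy')
  · intro w w' hadj
    obtain ⟨x, hx1, hx2, rfl⟩ := canon w
    obtain ⟨y, hy1, hy2, rfl⟩ := canon w'
    rcases lt_trichotomy x y with h | h | h
    · exact main x y hx1 h hy2 hadj
    · subst h
      exact (hadj.ne rfl).elim
    · exact (main y x hy1 h hx2 hadj.symm).symm

/-! ### Part 4: from an `M₄` minor to a Hamiltonian cycle with rungs -/

theorem path_list {V : Type*} {G : SimpleGraph V} {s : Set V} (hs : (G.induce s).Connected)
    {x y : V} (hx : x ∈ s) (hy : y ∈ s) :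
    ∃ L : List V, L.IsChain G.Adj ∧ L.Nodup ∧ L.head? = some x ∧ L.getLast? = some y ∧
      (∀ z ∈ L, z ∈ s) ∧ (G.induce {z | z ∈ L}).Connected := by
  classical
  obtain ⟨w, hw⟩ := (hs.preconnected ⟨x, hx⟩ ⟨y, hy⟩).exists_isPath
  let f : G.induce s →g G := (Embedding.induce s).toHom
  have hf : Function.Injective f := (Embedding.induce (G := G) s).injective
  refine ⟨(w.map f).support, (w.map f).isChain_adj_support, (hw.map hf).support_nodup, ?_, ?_, ?_,
    (w.map f).connected_induce_support⟩
  · rw [List.head?_eq_some_head (w.map f).support_ne_nil, Walk.head_support]; rfl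
  · rw [List.getLast?_eq_some_getLast (w.map f).support_ne_nil, Walk.getLast_support]; rfl
  · intro z hz
    rw [Walk.support_map, List.mem_map] at hz
    obtain ⟨a, -, rfl⟩ := hz
    exact a.2

theorem M4Model.shrink {V : Type*} {G : SimpleGraph V} {B : Fin 8 → Set V} (h : M4Model G B)
    (hconn : G.Connected) (hfree : ¬ IsMinor K33plus G) (k : Fin 8) (s : Set V)
    (hs : s ⊆ B k) (hsc : (G.induce s).Connected) (h1 : Touch G s (B (k + 1)))
    (h2 : Touch G (B (k - 1)) s) : B k ⊆ s := by
  intro v hv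
  have hr := h.rot k
  let C : Fin 8 → Set V := fun i => if i = 0 then s else B (i + k)
  have hCB : ∀ i, C i ⊆ B (i + k) := by
    intro i
    by_cases hi : i = 0
    · subst hi; simpa [C] using hs
    · simp [C, hi]
  have hC0 : C 0 = s := rfl
  have hC : ∀ i, i ≠ 0 → C i = B (i + k) := fun i hi => by simp [C, hi]
  obtain ⟨i, hi⟩ := m4_minus_span hconn hfree C
    (by
      intro i
      by_cases hi : i = 0
      · subst hi; rw [hC0]; exact hsc
      · rw [hC i hi]; exact h.conn _)
    (fun i j hij => (hr.disj hij).mono (hCB i) (hCB j))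
    (by
      intro i
      by_cases hi : i = 0
      · subst hi
        rw [hC0, hC _ (by decide), zero_add, add_comm]
        exact h1
      · by_cases hi' : i = 7
        · subst hi'
          have e : (7 : Fin 8) + 1 = 0 := by decide
          have e' : 7 + k = k - 1 := by
            rw [sub_eq_add_neg, add_comm]; rfl
          rw [e, hC0, hC _ (by decide), e']
          exact h2
        · rw [hC i hi, hC (i + 1) (by omega)]
          exact hr.rim i)
    (by rw [hC _ (by decide), hC _ (by decide)]; exact hr.rung 1)
    (by rw [hC _ (by decide), hC _ (by decide)]; exact hr.rung 2)
    (by rw [hC _ (by decide), hC _ (by decide)]; exact hr.rung 3) v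
  by_cases h0 : i = 0
  · subst h0; exact hi
  · exfalso
    have := hCB i hi
    refine Set.disjoint_left.1 (h.disj (i := i + k) (j := k) ?_) this hv
    simpa using h0

theorem M4Model.ham {V : Type*} {G : SimpleGraph V} {B : Fin 8 → Set V} (h : M4Model G B)
    (hconn : G.Connected) (hfree : ¬ IsMinor K33plus G) :
    ∃ (n : ℕ) (v : ℤ → V) (t : ℤ → ℤ), 8 ≤ n ∧ Ham G n v ∧ Rungs G n v t := by
  classical
  choose o ho nx hnx hadj using h.rim
  have hpred : ∀ i : Fin 8, i - 1 + 1 = i := fun i => sub_add_cancel _ _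
  have hin : ∀ i, nx (i - 1) ∈ B i := fun i => by
    have := hnx (i - 1)
    rwa [hpred] at this
  choose L hch hnd hhd hlast hsub hLc using fun i => path_list (h.conn i) (hin i) (ho i)
  have hne : ∀ i, L i ≠ [] := fun i e => by have := hhd i; rw [e] at this; simp at this
  have hmem : ∀ i z, z ∈ B i ↔ z ∈ L i := by
    intro i z
    refine ⟨fun hz => ?_, hsub i z⟩
    refine h.shrink hconn hfree i {z | z ∈ L i} (fun z hz => hsub i z hz) (hLc i) ?_ ?_ hz
    · exact ⟨o i, List.mem_of_getLast? (hlast i), _, hnx i, hadj i⟩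
    · exact ⟨_, ho (i - 1), _, List.mem_of_head? (hhd i), hadj (i - 1)⟩
  -- rung ends
  have hz : ∃ z : Fin 8 → V, (∀ i, z i ∈ L i) ∧ ∀ i, G.Adj (z i) (z (i + 4)) := by
    choose z hz z' hz' hzz using h.rung
    refine ⟨fun i => if i < 4 then z i else z' (i + 4), fun i => ?_, fun i => ?_⟩
    · rw [← hmem]
      by_cases hi : i < 4
      · simpa [hi] using hz i
      · have := hz' (i + 4)
        have e : i + 4 + 4 = i := by rw [add_assoc]; exact add_zero i
        rw [e] at this
        simpa [hi] using this
    · by_cases hi : i < 4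
      · have h2 : ¬ (i + 4 < 4) := by omega
        have e : i + 4 + 4 = i := by rw [add_assoc]; exact add_zero i
        simp only [hi, h2, if_true, if_false, e]
        exact hzz i
      · have h2 : i + 4 < 4 := by omega
        simp only [hi, h2, if_true, if_false]
        exact (hzz _).symm
  obtain ⟨z, hzL, hzadj⟩ := hz
  let W : List V := (List.ofFn L).flatten
  have hWmem : ∀ x, x ∈ W := by
    intro x
    obtain ⟨i, hi⟩ := h.span hconn hfree x
    rw [List.mem_flatten]
    exact ⟨L i, List.mem_ofFn.2 ⟨i, rfl⟩, (hmem i x).1 hi⟩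
  have hWnd : W.Nodup := by
    rw [List.nodup_flatten]
    constructor
    · intro l hl
      obtain ⟨i, rfl⟩ := List.mem_ofFn.1 hl
      exact hnd i
    · rw [List.pairwise_ofFn]
      intro i j hij x hx hx'
      exact Set.disjoint_left.1 (h.disj hij.ne) (hsub i x hx) (hsub j x hx')
  have hWch : W.IsChain G.Adj := by
    rw [List.isChain_flatten]
    · constructor
      · intro l hl
        obtain ⟨i, rfl⟩ := List.mem_ofFn.1 hl
        exact hch i
      · rw [List.isChain_iff_getElem]
        intro i hi x hx y hy
        simp only [List.length_ofFn] at hi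
        simp only [List.getElem_ofFn] at hx hy
        rw [hlast] at hx
        rw [hhd] at hy
        have e : (⟨i + 1, hi⟩ : Fin 8) - 1 = ⟨i, by omega⟩ := by
          rw [sub_eq_iff_eq_add]
          ext
          rw [Fin.val_add]
          change i + 1 = (i + 1) % 8
          omega
        rw [e] at hy
        simp only [Option.mem_def, Option.some.injEq] at hx hy
        rw [← hx, ← hy]
        have := hadj ⟨i, by omega⟩
        exact this
    · intro hnil
      obtain ⟨i, hi⟩ := List.mem_ofFn.1 hnil
      exact hne i hi
  have hWsub : List.Sublist (List.ofFn z) W := by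
    have : List.ofFn z = (List.ofFn fun i => [z i]).flatten := by
      simp [List.ofFn_succ]
    rw [this]
    simp only [W, List.ofFn_succ, List.ofFn_zero, List.flatten_cons, List.flatten_nil]
    repeat' first | apply List.Sublist.append | exact List.singleton_sublist.2 (hzL _)
    all_goals simp
  have hWhd : W.head? = some (nx 7) := by
    have e : W = L 0 ++ (List.ofFn fun i : Fin 7 => L i.succ).flatten := by
      simp [W, List.ofFn_succ]
    rw [e, List.head?_append, hhd 0]
    rfl
  have hWlast : W.getLast? = some (o 7) := by
    have e : W = (List.ofFn fun i : Fin 7 => L i.castSucc).flatten ++ L 7 := by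
      simp [W, List.ofFn_succ]
    rw [e, List.getLast?_append, hlast 7]
    rfl
  have hn8 : 8 ≤ W.length := by
    have := hWsub.length_le
    simpa using this
  clear_value W
  obtain ⟨f, hf⟩ := List.sublist_iff_exists_fin_orderEmbedding_get_eq.1 hWsub
  obtain ⟨n, hn⟩ : ∃ n, W.length = n := ⟨_, rfl⟩
  rw [hn] at hn8
  have hb : ∀ x : ℤ, (x % n).toNat < W.length := by
    intro x
    have h1 := Int.emod_nonneg x (b := (n : ℤ)) (by omega)
    have h2 := Int.emod_lt_of_pos x (b := (n : ℤ)) (by omega)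
    omega
  have hvnat : ∀ k : ℕ, (hk : k < W.length) → W[((k : ℤ) % n).toNat]'(hb _) = W[k] := by
    intro k hk
    congr 1
    rw [Int.emod_eq_of_lt (by omega) (by omega)]
    simp
  have hham : Ham G n (fun x => W[(x % n).toNat]'(hb x)) := by
    refine ⟨fun x y => ?_, fun w => ?_, fun x => ?_⟩
    · rw [hWnd.getElem_inj_iff]
      have h1 := Int.emod_nonneg x (b := (n : ℤ)) (by omega)
      have h2 := Int.emod_nonneg y (b := (n : ℤ)) (by omega)
      rw [← Int.emod_eq_emod_iff_emod_sub_eq_zero.trans Int.dvd_iff_emod_eq_zero.symm]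
      omega
    · obtain ⟨k, hk, rfl⟩ := List.getElem_of_mem (hWmem w)
      exact ⟨k, hvnat k hk⟩
    · have h1 := Int.emod_nonneg x (b := (n : ℤ)) (by omega)
      have h2 := Int.emod_lt_of_pos x (b := (n : ℤ)) (by omega)
      rw [List.isChain_iff_getElem] at hWch
      by_cases hx : x % n + 1 < n
      · have e : ((x + 1) % n).toNat = (x % n).toNat + 1 := by
          rw [← Int.emod_add_emod, Int.emod_eq_of_lt (by omega) hx]
          omega
        have := hWch (x % n).toNat (by omega)
        simp only [e]
        exact this
      · have e : ((x + 1) % n).toNat = 0 := by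
          rw [← Int.emod_add_emod]
          have : x % n + 1 = n := by omega
          rw [this]; simp
        have e' : (x % n).toNat = W.length - 1 := by omega
        simp only [e, e']
        rw [List.head?_eq_getElem?, List.getElem?_eq_getElem (by omega), Option.some.injEq] at hWhd
        rw [List.getLast?_eq_getElem?, List.getElem?_eq_getElem (by omega),
          Option.some.injEq] at hWlast
        rw [hWhd, hWlast]
        exact hadj 7
  have hF : ∃ F : ℕ → ℕ, (∀ i, i < 8 → F i < n) ∧ (∀ i j, i < j → j < 8 → F i < F j) ∧
      ∀ i, (hi : i < 8) → W[((F i : ℕ) % n : ℤ).toNat]'(hb _) = z ⟨i, hi⟩ := by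
    refine ⟨fun i => if hi : i < 8 then (f ⟨i, by simpa using hi⟩).val else 0, ?_, ?_, ?_⟩
    · intro i hi
      simp only [hi, dif_pos]
      exact lt_of_lt_of_eq (f _).2 hn
    · intro i j hij hj
      simp only [hj, hij.trans hj, dif_pos]
      exact f.strictMono (by simpa using hij)
    · intro i hi
      simp only [hi, dif_pos]
      have := hf ⟨i, by simpa using hi⟩
      rw [hvnat _ (f _).2]
      rw [List.get_eq_getElem, List.get_eq_getElem, List.getElem_ofFn] at this
      exact this.symm
  obtain ⟨F, hF1, hF2, hF3⟩ := hF
  refine ⟨n, _, fun i => F (i % 8).toNat + n * (i / 8), hn8, hham, ?_, ?_, ?_⟩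
  · intro i
    have e : (i + 8) / 8 = i / 8 + 1 := by omega
    simp only [Int.add_emod_right, e]
    ring
  · intro i
    by_cases hi : i % 8 = 7
    · have e : (i + 1) / 8 = i / 8 + 1 := by omega
      have e1 : (i + 1) % 8 = 0 := by omega
      have := hF1 7 (by omega)
      simp only [e, e1, hi, mul_add]
      simp
      omega
    · have e : (i + 1) / 8 = i / 8 := by omega
      have := hF2 (i % 8).toNat ((i + 1) % 8).toNat (by omega) (by omega)
      simp only [e]
      omega
  · intro i
    have key : ∀ j : ℤ, (hj : (j % 8).toNat < 8) →
        W[((F (j % 8).toNat + n * (j / 8) : ℤ) % n).toNat]'(hb _) = z ⟨(j % 8).toNat, hj⟩ := by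
      intro j hj
      rw [← hF3 _ hj]
      congr 2
      simp
    have h1 : (i % 8).toNat < 8 := by omega
    have h2 : ((i + 4) % 8).toNat < 8 := by omega
    rw [key i h1, key (i + 4) h2]
    have e : (⟨((i + 4) % 8).toNat, h2⟩ : Fin 8) = ⟨(i % 8).toNat, h1⟩ + 4 := by
      ext
      rw [Fin.val_add]
      change ((i + 4) % 8).toNat = ((i % 8).toNat + 4) % 8
      omega
    rw [e]
    exact hzadj _

theorem m4_model_of_minor {V : Type*} {G : SimpleGraph V} (hm : IsMinor (mobiusLadder 4) G) :
    ∃ B, M4Model G B := by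
  obtain ⟨B, -, hc, hd, he⟩ := hm
  refine ⟨B, hc, hd, fun i => he ?_, fun i => he ?_⟩
  · rw [mobiusLadder, SimpleGraph.fromRel_adj]
    revert i; decide
  · rw [mobiusLadder, SimpleGraph.fromRel_adj]
    revert i; decide


/-- A connected {K33+, K5h}-free graph with an `M₄` minor is a minor of `M_n`
for some `n ≥ 4`. -/
theorem stmt9 {V : Type} [Fintype V] (G : SimpleGraph V) (hconn : G.Connected)
    (hfree : ¬ IsMinor K33plus G ∧ ¬ IsMinor K5h G)
    (hm : IsMinor (mobiusLadder 4) G) :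
    ∃ n, 4 ≤ n ∧ IsMinor G (mobiusLadder n) := by
  obtain ⟨B, hB⟩ := m4_model_of_minor hm
  obtain ⟨n, v, t, hn, hv, ht⟩ := hB.ham hconn hfree.1
  have mono : StrictMono t := strictMono_int_of_lt_succ ht.lt
  have m1 := mono (show (0 : ℤ) < 1 by omega)
  have m2 := mono (show (1 : ℤ) < 4 by omega)
  have m3 := mono (show (4 : ℤ) < 5 by omega)
  have m4 := mono (show (5 : ℤ) < 8 by omega)
  have m5 := ht.per 0
  rw [zero_add] at m5
  refine ⟨n, by omega, embed_ladder (m := t 4 - t 0) (by omega) (hv.shift (t 0)) (by omega)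
    (by omega) ?_ ?_⟩
  · simpa using ht.adj 0
  · intro a b c d hab h1 hbc hcd h2 hda
    exact no_parallel hconn hfree.1 hfree.2 hv ht (by omega) h1 (by omega)
      (by omega) h2 (by omega)
end

section
/- Let H be a 3-connected almost-planar graph and let G be obtained from H by repeatedly subdividing edges, where every subdivided edge belongs to D(H). Then G is almost-planar, and so is any graph obtained from G by adding isolated vertices. -/
open SimpleGraph

/-- Reduction data: vertices outside the range of `f` are inner; each inner vertex carries a
set of ends which is constant on components of inner vertices and is a clique of `H`. -/
structure Red {U V : Type*} (G : SimpleGraph V) (H : SimpleGraph U) (f : U ↪ V)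
    (A : V → Set U) : Prop where
  adj : ∀ a b, G.Adj (f a) (f b) → H.Adj a b
  ends : ∀ x a, x ∉ Set.range f → G.Adj x (f a) → a ∈ A x
  const : ∀ x y, x ∉ Set.range f → y ∉ Set.range f → G.Adj x y → A x = A y
  clique : ∀ x a b, x ∉ Set.range f → a ∈ A x → b ∈ A x → a = b ∨ H.Adj a b

/-- Inner vertices have at most two neighbours. -/
def DegTwo {U V : Type*} (G : SimpleGraph V) (f : U ↪ V) : Prop :=
  ∀ x, x ∉ Set.range f → ∃ p q, ∀ y, G.Adj x y → y = p ∨ y = q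

/-- A connected set of inner vertices has at most two outside neighbours. -/
def Thin {U V : Type*} (G : SimpleGraph V) (f : U ↪ V) : Prop :=
  ∀ D : Set V, (∀ x ∈ D, x ∉ Set.range f) → (G.induce D).Connected →
    ∀ (d y : Fin 3 → V), Function.Injective y → (∀ i, d i ∈ D) → (∀ i, y i ∉ D) →
      (∀ i, G.Adj (d i) (y i)) → False

/-- Every vertex has three distinct neighbours. -/
def DegThree {W : Type*} (K : SimpleGraph W) : Prop :=
  ∀ w, ∃ n : Fin 3 → W, Function.Injective n ∧ ∀ i, K.Adj w (n i)

lemma degThree_K5 : DegThree K5 := by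
  unfold DegThree K5
  intro w
  refine ⟨fun i => w + (⟨i.val + 1, by omega⟩ : Fin 5), ?_, ?_⟩
  · revert w; decide
  · revert w; simp only [top_adj]; decide

lemma degThree_K33 : DegThree K33 := by
  unfold DegThree K33
  rintro (w | w)
  · exact ⟨Sum.inr, Sum.inr_injective, fun i => by simp⟩
  · exact ⟨Sum.inl, Sum.inl_injective, fun i => by simp⟩

lemma DegTwo.thin {U V : Type*} [Finite V] {G : SimpleGraph V} {f : U ↪ V}
    (h : DegTwo G f) : Thin G f := by
  classical
  intro D hD hc d y hy hd hyD hadj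
  have := Fintype.ofFinite V
  have hE := hc.card_vert_le_card_edgeSet_add_one
  rw [Nat.card_eq_fintype_card, Nat.card_eq_fintype_card, ← edgeFinset_card] at hE
  have hS := (G.induce D).sum_degrees_eq_twice_card_edges
  have key : ∀ x : D, (G.induce D).degree x
      + (Finset.univ.filter (fun i => d i = x.1)).card ≤ 2 := by
    intro x
    obtain ⟨p, q, hpq⟩ := h x.1 (hD _ x.2)
    have h1 : ((G.induce D).degree x) =
        (((G.induce D).neighborFinset x).map (Function.Embedding.subtype _)).card := by
      rw [Finset.card_map, card_neighborFinset_eq_degree]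
    have h2 : (Finset.univ.filter (fun i => d i = x.1)).card =
        ((Finset.univ.filter (fun i => d i = x.1)).map ⟨y, hy⟩).card := by
      rw [Finset.card_map]
    rw [h1, h2, ← Finset.card_union_of_disjoint]
    · refine (Finset.card_le_card (t := {p, q}) ?_).trans Finset.card_le_two
      intro z hz
      simp only [Finset.mem_union, Finset.mem_map, mem_neighborFinset, Finset.mem_filter,
        Finset.mem_univ, true_and] at hz
      simp only [Finset.mem_insert, Finset.mem_singleton]
      rcases hz with ⟨z', hz', rfl⟩ | ⟨i, hi, rfl⟩
      · exact hpq _ hz'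
      · exact hpq _ (hi ▸ hadj i)
    · rw [Finset.disjoint_left]
      intro z hz hz'
      simp only [Finset.mem_map, Finset.mem_filter, Finset.mem_univ, true_and] at hz hz'
      obtain ⟨z1, -, rfl⟩ := hz
      obtain ⟨i, -, hi⟩ := hz'
      have hi' : y i = z1.1 := hi
      exact hyD i (hi' ▸ z1.2)
  have hsum := Finset.sum_le_sum (fun x (_ : x ∈ (Finset.univ : Finset D)) => key x)
  rw [Finset.sum_add_distrib, hS] at hsum
  have h3 : ∑ x : D, (Finset.univ.filter (fun i => d i = x.1)).card = 3 := by
    have := Finset.card_eq_sum_card_fiberwise (f := fun i : Fin 3 => (⟨d i, hd i⟩ : D))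
      (s := Finset.univ) (t := Finset.univ) (by intro i _; simp)
    simp only [Finset.card_univ, Fintype.card_fin] at this
    refine Eq.trans ?_ this.symm
    refine Finset.sum_congr rfl fun x _ => ?_
    congr 1
    ext i
    simp [Subtype.ext_iff]
  rw [h3] at hsum
  simp only [Finset.sum_const, Finset.card_univ, smul_eq_mul] at hsum
  omega

lemma Red.minor {U V W : Type*} {G : SimpleGraph V} {H : SimpleGraph U} {f : U ↪ V}
    {A : V → Set U} (R : Red G H f A) (T : Thin G f) {K : SimpleGraph W} (hK : DegThree K)
    (hm : IsMinor K G) : IsMinor K H := by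
  obtain ⟨B, hne, hcon, hdis, hadj⟩ := hm
  have uniq : ∀ {w w' x}, x ∈ B w → x ∈ B w' → w = w' := by
    intro w w' x h1 h2
    by_contra h
    exact Set.disjoint_left.1 (hdis h) h1 h2
  have hmeet : ∀ w, ∃ a, f a ∈ B w := by
    intro w
    by_contra hno
    push Not at hno
    obtain ⟨n, hn, hn'⟩ := hK w
    choose d hd y hy hdy using fun i => hadj (hn' i)
    refine T (B w) ?_ (hcon w) d y ?_ hd ?_ hdy
    · rintro x hx ⟨a, rfl⟩
      exact hno a hx
    · intro i j hij
      exact hn (uniq (hy i) (hij ▸ hy j))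
    · intro i hi
      exact (hn' i).ne (uniq hi (hy i))
  let Q : V → U → Prop := fun x c => x = f c ∨ (x ∉ Set.range f ∧ c ∈ A x)
  have hQ : ∀ {x y c d}, G.Adj x y → Q x c → Q y d → c = d ∨ H.Adj c d := by
    rintro x y c d hxy (rfl | ⟨hx, hc⟩) (rfl | ⟨hy, hd⟩)
    · exact Or.inr (R.adj _ _ hxy)
    · exact R.clique y c d hy (R.ends y c hy hxy.symm) hd
    · exact R.clique x c d hx hc (R.ends x d hx hxy)
    · exact R.clique x c d hx hc (by rw [R.const x y hx hy hxy]; exact hd)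
  have main : ∀ w a0 (h0 : f a0 ∈ B w) (x : B w), ∃ c, Q x.1 c ∧ ∃ hc : f c ∈ B w,
      (H.induce (f ⁻¹' B w)).Reachable ⟨a0, h0⟩ ⟨c, hc⟩ := by
    intro w a0 h0 x
    have hr : Relation.ReflTransGen (G.induce (B w)).Adj ⟨f a0, h0⟩ x :=
      (SimpleGraph.reachable_iff_reflTransGen _ _).1 ((hcon w).preconnected _ _)
    induction hr with
    | refl => exact ⟨a0, Or.inl rfl, h0, Reachable.refl _⟩
    | @tail y z _ hyz ih =>
      obtain ⟨c, hQc, hc, hcr⟩ := ih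
      have hyz' : G.Adj y.1 z.1 := hyz
      by_cases hz : z.1 ∈ Set.range f
      · obtain ⟨b, hb⟩ := hz
        have hbB : f b ∈ B w := hb ▸ z.2
        refine ⟨b, Or.inl hb.symm, hbB, ?_⟩
        rcases hQ hyz' hQc (Or.inl hb.symm : Q z.1 b) with rfl | hcb
        · exact hcr
        · refine hcr.trans (Adj.reachable ?_)
          exact hcb
      · refine ⟨c, Or.inr ⟨hz, ?_⟩, hc, hcr⟩
        rcases hQc with hyc | ⟨hy, hcA⟩
        · exact R.ends _ _ hz (hyc ▸ hyz'.symm)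
        · rw [← R.const _ _ hy hz hyz']; exact hcA
  refine ⟨fun w => f ⁻¹' B w, hmeet, ?_, ?_, ?_⟩
  · intro w
    obtain ⟨a0, h0⟩ := hmeet w
    rw [connected_iff_exists_forall_reachable]
    refine ⟨⟨a0, h0⟩, fun ⟨b, hb⟩ => ?_⟩
    obtain ⟨c, hQc, hc, hr⟩ := main w a0 h0 ⟨f b, hb⟩
    rcases hQc with h | ⟨h, -⟩
    · have := f.injective h
      subst this
      exact hr
    · exact absurd ⟨b, rfl⟩ h
  · intro w w' hw
    exact (hdis hw).preimage f
  · intro w w' hw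
    obtain ⟨v1, hv1, v2, hv2, hv⟩ := hadj hw
    obtain ⟨a1, h1⟩ := hmeet w
    obtain ⟨a2, h2⟩ := hmeet w'
    obtain ⟨c, hQc, hc, -⟩ := main w a1 h1 ⟨v1, hv1⟩
    obtain ⟨d, hQd, hd, -⟩ := main w' a2 h2 ⟨v2, hv2⟩
    refine ⟨c, hc, d, hd, ?_⟩
    rcases hQ hv hQc hQd with rfl | h
    · exact absurd (uniq hc hd) hw.ne
    · exact h

lemma Red.planar {U V : Type*} {G : SimpleGraph V} {H : SimpleGraph U} {f : U ↪ V}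
    {A : V → Set U} (R : Red G H f A) (T : Thin G f) (h : Planar H) : Planar G :=
  ⟨fun hm => h.1 (R.minor T degThree_K5 hm), fun hm => h.2 (R.minor T degThree_K33 hm)⟩

open Classical in
/-- The quotient map of the contraction of `uw`. -/
noncomputable def mg {V : Type*} (u w : V) : V → V := fun a => if a = w then u else a

lemma contract_adj_exists {V : Type*} {G : SimpleGraph V} {u w a b : V}
    (h : (contractEdge G u w).Adj a b) :
    ∃ a' b', G.Adj a' b' ∧ mg u w a' = a ∧ mg u w b' = b := by
  unfold contractEdge at h
  rw [fromRel_adj] at h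
  obtain ⟨-, ⟨ha, hb, h⟩ | ⟨hb, ha, h⟩⟩ := h
  · rcases h with h | ⟨rfl, h⟩ | ⟨rfl, h⟩
    · exact ⟨a, b, h, by simp [mg, ha], by simp [mg, hb]⟩
    · exact ⟨w, b, h, by simp [mg], by simp [mg, hb]⟩
    · exact ⟨a, w, h, by simp [mg, ha], by simp [mg]⟩
  · rcases h with h | ⟨rfl, h⟩ | ⟨rfl, h⟩
    · exact ⟨a, b, h.symm, by simp [mg, ha], by simp [mg, hb]⟩
    · exact ⟨a, w, h.symm, by simp [mg, ha], by simp [mg]⟩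
    · exact ⟨w, b, h.symm, by simp [mg], by simp [mg, hb]⟩

lemma contract_adj_of {V : Type*} {G : SimpleGraph V} {u w a b : V} (huw : u ≠ w)
    (h : G.Adj a b) (hne : mg u w a ≠ mg u w b) :
    (contractEdge G u w).Adj (mg u w a) (mg u w b) := by
  unfold contractEdge
  rw [fromRel_adj]
  refine ⟨hne, Or.inl ?_⟩
  unfold mg at *
  by_cases ha : a = w <;> by_cases hb : b = w
  · simp [ha, hb] at hne
  · subst ha
    simp [hb, huw, h]
  · subst hb
    simp [ha, huw, h]
  · simp [ha, hb, h]

lemma mg_range {U V : Type*} {f : U ↪ V} {u v : U} {x : V} {a : U}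
    (h : mg (f u) (f v) x = f a) : ∃ b, x = f b ∧ mg u v b = a := by
  unfold mg at h
  by_cases hx : x = f v
  · exact ⟨v, hx, by simp only [hx, if_true] at h; simpa [mg] using f.injective h⟩
  · simp only [hx, if_false] at h
    refine ⟨a, h, ?_⟩
    have : a ≠ v := by rintro rfl; exact hx h
    simp [mg, this]

lemma mg_not_range {U V : Type*} {f : U ↪ V} {u v : U} {x y : V}
    (h : mg (f u) (f v) x = y) (hy : y ∉ Set.range f) : x = y := by
  unfold mg at h
  by_cases hx : x = f v
  · simp only [hx, if_true] at h
    exact absurd ⟨u, h⟩ hy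
  · simpa [hx] using h

lemma Red.contract {U V : Type*} {G : SimpleGraph V} {H : SimpleGraph U} {f : U ↪ V}
    {A : V → Set U} (R : Red G H f A) {u v : U} (huv : u ≠ v) :
    Red (contractEdge G (f u) (f v)) (contractEdge H u v) f (fun x => mg u v '' A x) where
  adj a b h := by
    obtain ⟨a', b', h', ha, hb⟩ := contract_adj_exists h
    obtain ⟨a1, rfl, rfl⟩ := mg_range ha
    obtain ⟨b1, rfl, rfl⟩ := mg_range hb
    refine contract_adj_of huv (R.adj _ _ h') ?_
    intro he
    exact h.ne (congrArg f he)
  ends x a hx h := by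
    obtain ⟨a', b', h', ha, hb⟩ := contract_adj_exists h
    obtain rfl := mg_not_range ha hx
    obtain ⟨b1, rfl, rfl⟩ := mg_range hb
    exact ⟨b1, R.ends _ _ hx h', rfl⟩
  const x y hx hy h := by
    obtain ⟨a', b', h', ha, hb⟩ := contract_adj_exists h
    obtain rfl := mg_not_range ha hx
    obtain rfl := mg_not_range hb hy
    simp only [R.const _ _ hx hy h']
  clique := by
    rintro x _ _ hx ⟨a, ha, rfl⟩ ⟨b, hb, rfl⟩
    by_cases hne : mg u v a = mg u v b
    · exact Or.inl hne
    · right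
      rcases R.clique x a b hx ha hb with rfl | h
      · exact absurd rfl hne
      · exact contract_adj_of huv h hne

lemma DegTwo.contract {U V : Type*} {G : SimpleGraph V} {f : U ↪ V}
    (h : DegTwo G f) (u v : U) : DegTwo (contractEdge G (f u) (f v)) f := by
  intro x hx
  obtain ⟨p, q, hpq⟩ := h x hx
  refine ⟨mg (f u) (f v) p, mg (f u) (f v) q, fun y hy => ?_⟩
  obtain ⟨a', b', h', ha, hb⟩ := contract_adj_exists hy
  obtain rfl := mg_not_range ha hx
  rcases hpq _ h' with rfl | rfl
  · exact Or.inl hb.symm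
  · exact Or.inr hb.symm

lemma thin_of_isolated {U V : Type*} {G : SimpleGraph V} {f : U ↪ V}
    (h : ∀ x, x ∉ Set.range f → ∀ y, ¬ G.Adj x y) : Thin G f :=
  fun _ hD _ _ _ _ hd _ hdy => h _ (hD _ (hd 0)) _ (hdy 0)

lemma isMinor_of_embedding {U V W : Type*} {G : SimpleGraph V} {H : SimpleGraph U} (f : U ↪ V)
    (hf : ∀ a b, H.Adj a b → G.Adj (f a) (f b)) {K : SimpleGraph W} (h : IsMinor K H) :
    IsMinor K G := by
  obtain ⟨B, hne, hcon, hdis, hadj⟩ := h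
  refine ⟨fun w => f '' B w, fun w => (hne w).image f, ?_, ?_, ?_⟩
  · intro w
    let φ : H.induce (B w) →g G.induce (f '' B w) :=
      ⟨fun x => ⟨f x.1, x.1, x.2, rfl⟩, fun {a b} hab => hf _ _ hab⟩
    refine (hcon w).map φ ?_
    rintro ⟨_, a, ha, rfl⟩
    exact ⟨⟨a, ha⟩, rfl⟩
  · intro w w' hw
    exact (Set.disjoint_image_iff f.injective).2 (hdis hw)
  · intro w w' hw
    obtain ⟨a, ha, b, hb, hab⟩ := hadj hw
    exact ⟨f a, ⟨a, ha, rfl⟩, f b, ⟨b, hb, rfl⟩, hf _ _ hab⟩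

lemma isMinor_of_contraction {U V W : Type*} {G : SimpleGraph V} {H : SimpleGraph U}
    (f : U → V) (φ : V → U) (hφ : ∀ u, φ (f u) = u)
    (hfib : ∀ x, ∃ p : G.Walk x (f (φ x)), ∀ y ∈ p.support, φ y = φ x)
    (hadj' : ∀ a b, H.Adj a b → ∃ x y, φ x = a ∧ φ y = b ∧ G.Adj x y)
    {K : SimpleGraph W} (h : IsMinor K H) : IsMinor K G := by
  obtain ⟨B, hne, hcon, hdis, hadj⟩ := h
  have hreach : ∀ (S : Set U) (x : V) (hx : φ x ∈ S),
      (G.induce (φ ⁻¹' S)).Reachable ⟨x, hx⟩ ⟨f (φ x), by simpa [hφ] using hx⟩ := by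
    intro S x hx
    obtain ⟨p, hp⟩ := hfib x
    exact ⟨p.induce (φ ⁻¹' S) (fun y hy => by simpa [hp y hy] using hx)⟩
  have hreach2 : ∀ (S : Set U) (a b : S), (H.induce S).Reachable a b →
      (G.induce (φ ⁻¹' S)).Reachable ⟨f a, by simp [hφ]⟩ ⟨f b, by simp [hφ]⟩ := by
    intro S a b hr
    rw [SimpleGraph.reachable_iff_reflTransGen] at hr
    induction hr with
    | refl => exact Reachable.refl _
    | @tail c d _ hcd ih =>
      refine ih.trans ?_
      obtain ⟨x, y, hx, hy, hxy⟩ := hadj' c.1 d.1 hcd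
      have hxS : φ x ∈ S := hx ▸ c.2
      have hyS : φ y ∈ S := hy ▸ d.2
      have h1 := (hreach S x hxS).symm
      have h2 := hreach S y hyS
      have h3 : (G.induce (φ ⁻¹' S)).Adj ⟨x, hxS⟩ ⟨y, hyS⟩ := hxy
      have h4 := (h1.trans h3.reachable).trans h2
      simp only [hx, hy] at h4
      exact h4
  refine ⟨fun w => φ ⁻¹' B w, ?_, ?_, fun w w' hw => (hdis hw).preimage φ, ?_⟩
  · intro w
    obtain ⟨a, ha⟩ := hne w
    exact ⟨f a, by simpa [hφ] using ha⟩
  · intro w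
    obtain ⟨a, ha⟩ := hne w
    rw [connected_iff_exists_forall_reachable]
    refine ⟨⟨f a, by simpa [hφ] using ha⟩, fun ⟨x, hx⟩ => ?_⟩
    exact (hreach2 (B w) ⟨a, ha⟩ ⟨φ x, hx⟩ ((hcon w).preconnected _ _)).trans
      (hreach (B w) x hx).symm
  · intro w w' hw
    obtain ⟨a, ha, b, hb, hab⟩ := hadj hw
    obtain ⟨x, y, rfl, rfl, hxy⟩ := hadj' a b hab
    exact ⟨x, ha, y, hb, hxy⟩

lemma AlmostPlanar.addIsolated {V V₂ : Type*} {G : SimpleGraph V} {G₂ : SimpleGraph V₂}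
    (h : AlmostPlanar G) (hi : AddIsolated G₂ G) : AlmostPlanar G₂ := by
  obtain ⟨f, hf, hiso⟩ := hi
  refine ⟨fun hp => h.1 ⟨fun hm => hp.1 ?_, fun hm => hp.2 ?_⟩, ?_⟩
  · exact isMinor_of_embedding f (fun a b => (hf a b).2) hm
  · exact isMinor_of_embedding f (fun a b => (hf a b).2) hm
  intro x y hxy
  have hx : x ∈ Set.range f := by
    by_contra hx; exact hiso x hx y hxy
  have hy : y ∈ Set.range f := by
    by_contra hy; exact hiso y hy x hxy.symm
  obtain ⟨a, rfl⟩ := hx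
  obtain ⟨b, rfl⟩ := hy
  have hab := (hf a b).1 hxy
  have R : Red G₂ G f (fun _ => ∅) :=
    ⟨fun a b => (hf a b).1, fun x a hx hxa => (hiso x hx _ hxa).elim,
      fun x y _ _ _ => rfl, fun x a b _ ha => ha.elim⟩
  rcases h.2 hab with hp | hp
  · left
    refine Red.planar (f := f) (A := fun _ => ∅) ?_ (thin_of_isolated ?_) hp
    · refine ⟨fun c d hcd => ?_, fun x a hx hxa => (hiso x hx _ hxa.1).elim,
      fun x y _ _ _ => rfl, fun x a b _ ha => ha.elim⟩
      rw [deleteEdges_adj] at hcd ⊢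
      refine ⟨(hf _ _).1 hcd.1, fun he => hcd.2 ?_⟩
      have := congrArg (Sym2.map f) (Set.mem_singleton_iff.1 he)
      simpa using this
    · intro x hx y hxy
      exact hiso x hx y hxy.1
  · right
    refine (R.contract hab.ne).planar (thin_of_isolated ?_) hp
    intro x hx y hxy
    obtain ⟨a', b', h', ha, hb⟩ := contract_adj_exists hxy
    obtain rfl := mg_not_range ha hx
    exact hiso _ hx _ h'

lemma edge_of_length_one {V : Type*} {G : SimpleGraph V} {a b : V} (q : G.Walk a b)
    (hl : q.length = 1) {e : Sym2 V} (he : e ∈ q.edges) : e = s(a, b) := by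
  cases q with
  | nil => simp at hl
  | cons h1 q' =>
    cases q' with
    | nil => simpa using he
    | cons h2 q'' => simp at hl

lemma path_split {V : Type*} {G : SimpleGraph V} {a b : V} (p : G.Walk a b) (hp : p.IsPath)
    (e : Sym2 V) (he : e ∈ p.edges) :
    ∃ S₁ S₂ : Set V, a ∈ S₁ ∧ b ∈ S₂ ∧ Disjoint S₁ S₂ ∧ S₁ ⊆ {x | x ∈ p.support} ∧
      S₂ ⊆ {x | x ∈ p.support} ∧
      ∀ x y, s(x, y) ∈ p.edges → s(x, y) ≠ e → (x ∈ S₁ ∧ y ∈ S₁) ∨ (x ∈ S₂ ∧ y ∈ S₂) := by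
  induction p with
  | nil => simp at he
  | @cons u v w h q ih =>
    rw [Walk.cons_isPath_iff] at hp
    by_cases hev : e = s(u, v)
    · refine ⟨{u}, {x | x ∈ q.support}, rfl, by simp, ?_, ?_, ?_, ?_⟩
      · simpa using hp.2
      · simp
      · intro x hx
        simp only [Set.mem_ofPred_eq] at hx
        simp [hx]
      · intro x y hxy hne
        rw [Walk.edges_cons, List.mem_cons] at hxy
        rcases hxy with hxy | hxy
        · exact absurd (hxy.trans hev.symm) hne
        · exact Or.inr ⟨q.fst_mem_support_of_mem_edges hxy, q.snd_mem_support_of_mem_edges hxy⟩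
    · have heq : e ∈ q.edges := by
        rw [Walk.edges_cons, List.mem_cons] at he
        exact he.resolve_left hev
      obtain ⟨S₁, S₂, h1, h2, hd, hs1, hs2, hE⟩ := ih hp.1 heq
      refine ⟨insert u S₁, S₂, Set.mem_insert _ _, h2, ?_, ?_, ?_, ?_⟩
      · rw [Set.disjoint_insert_left]
        exact ⟨fun hu => hp.2 (hs2 hu), hd⟩
      · rintro x (rfl | hx)
        · simp
        · have := hs1 hx
          simp only [Set.mem_ofPred_eq] at this
          simp [this]
      · intro x hx
        have := hs2 hx
        simp only [Set.mem_ofPred_eq] at this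
        simp [this]
      · intro x y hxy hne
        rw [Walk.edges_cons, List.mem_cons] at hxy
        rcases hxy with hxy | hxy
        · rw [Sym2.eq_iff] at hxy
          rcases hxy with ⟨rfl, rfl⟩ | ⟨rfl, rfl⟩
          · exact Or.inl ⟨Set.mem_insert _ _, Or.inr h1⟩
          · exact Or.inl ⟨Or.inr h1, Set.mem_insert _ _⟩
        · rcases hE x y hxy hne with h' | h'
          · exact Or.inl ⟨Or.inr h'.1, Or.inr h'.2⟩
          · exact Or.inr h'

lemma path_deg {V : Type*} {G : SimpleGraph V} {a b x : V} (p : G.Walk a b) (hp : p.IsPath)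
    (hx : x ∈ p.support) (ha : x ≠ a) (hb : x ≠ b) :
    ∃ r t, ∀ y, s(x, y) ∈ p.edges → y = r ∨ y = t := by
  obtain ⟨i, rfl, hi⟩ := Walk.mem_support_iff_exists_getVert.1 hx
  refine ⟨p.getVert (i - 1), p.getVert (i + 1), fun y hy => ?_⟩
  have h0 : i ≠ 0 := by rintro rfl; simp at ha
  have hl : i ≠ p.length := by rintro rfl; simp at hb
  have h1 := hp.neighborSet_toSubgraph_internal h0 (by omega)
  have h2 : y ∈ p.toSubgraph.neighborSet (p.getVert i) := by
    rw [Subgraph.mem_neighborSet, ← Subgraph.mem_edgeSet, Walk.mem_edges_toSubgraph]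
    exact hy
  rw [h1] at h2
  simpa using h2

theorem almostPlanar_of_subdivision {U V : Type*} [Finite V] (H : SimpleGraph U)
    (G : SimpleGraph V) (hHap : AlmostPlanar H)
    (hsub : IsSubdivisionWithin G H (Dset H)) : AlmostPlanar G := by
  classical
  obtain ⟨f, p, hpath, hrev, hlen, hbr, hint, hcov, hedge⟩ := hsub
  -- support and edges only depend on the underlying unordered edge
  have same : ∀ {a b c d : U} (h : H.Adj a b) (h' : H.Adj c d), s(a, b) = s(c, d) →
      (∀ x, x ∈ (p h).support → x ∈ (p h').support) ∧
      (∀ e, e ∈ (p h).edges → e ∈ (p h').edges) := by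
    intro a b c d h h' he
    rw [Sym2.eq_iff] at he
    rcases he with ⟨rfl, rfl⟩ | ⟨rfl, rfl⟩
    · exact ⟨fun _ hx => hx, fun _ hx => hx⟩
    · have := hrev h
      refine ⟨fun x hx => ?_, fun e he => ?_⟩
      · rw [this]; simpa using hx
      · rw [this]; simpa using he
  have uniq : ∀ {a b c d : U} (h : H.Adj a b) (h' : H.Adj c d) {x : V}, x ∉ Set.range f →
      x ∈ (p h).support → x ∈ (p h').support → s(a, b) = s(c, d) := by
    intro a b c d h h' x hx h1 h2
    by_contra hne
    exact hx (hint h h' hne x h1 h2)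
  have hedge' : ∀ {x y}, G.Adj x y → ∃ (u v : U) (h : H.Adj u v), s(x, y) ∈ (p h).edges :=
    fun {x y} hxy => hedge s(x, y) hxy
  have hbr2 : ∀ {u v a b : U} (h : H.Adj u v), s(f a, f b) ∈ (p h).edges →
      s(a, b) = s(u, v) := by
    intro u v a b h he
    have hne : f a ≠ f b := ((p h).edges_subset_edgeSet he : G.Adj _ _).ne
    have hab : a ≠ b := fun h => hne (congrArg f h)
    have h1 := hbr h a ((p h).fst_mem_support_of_mem_edges he)
    have h2 := hbr h b ((p h).snd_mem_support_of_mem_edges he)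
    rw [Sym2.eq_iff]
    rcases h1 with rfl | rfl <;> rcases h2 with rfl | rfl <;> simp_all
  have hdeg : DegTwo G f := by
    intro x hx
    obtain ⟨u, v, h, hs⟩ := (hcov x).resolve_left hx
    obtain ⟨r, t, hrt⟩ := path_deg (p h) (hpath h) hs (fun he => hx ⟨_, he.symm⟩)
      (fun he => hx ⟨_, he.symm⟩)
    refine ⟨r, t, fun y hy => hrt y ?_⟩
    obtain ⟨c, d, h', he⟩ := hedge' hy
    exact (same h' h (uniq h' h hx ((p h').fst_mem_support_of_mem_edges he) hs)).2 _ he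
  refine ⟨?_, ?_⟩
  · -- nonplanarity
    have hL : ∃ L : V → Sym2 U, ∀ x, x ∉ Set.range f → ∀ (u v : U) (h : H.Adj u v),
        x ∈ (p h).support → L x = s(u, v) := by
      have : ∀ x : V, ∃ l : Option (Sym2 U), x ∉ Set.range f → ∀ (u v : U) (h : H.Adj u v),
          x ∈ (p h).support → l = some s(u, v) := by
        intro x
        by_cases hx : x ∈ Set.range f
        · exact ⟨none, fun h => absurd hx h⟩
        · obtain ⟨u, v, h, hs⟩ := (hcov x).resolve_left hx
          exact ⟨some s(u, v), fun _ c d h' hs' => congrArg some (uniq h h' hx hs hs')⟩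
      choose l hl using this
      by_cases hne : Nonempty U
      · obtain ⟨u0⟩ := hne
        refine ⟨fun x => (l x).getD s(u0, u0), fun x hx u v h hs => ?_⟩
        simp [hl x hx u v h hs]
      · have hV : IsEmpty V := ⟨fun x => by
          rcases hcov x with ⟨a, -⟩ | ⟨a, -⟩
          · exact hne ⟨a⟩
          · exact hne ⟨a⟩⟩
        exact ⟨fun x => hV.elim x, fun x => hV.elim x⟩
    obtain ⟨L, hL⟩ := hL
    let φ : V → U := fun x => if h : ∃ a, f a = x then h.choose else (L x).out.1
    have hφf : ∀ a, φ (f a) = a := by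
      intro a
      have h : ∃ b, f b = f a := ⟨a, rfl⟩
      simp only [φ, dif_pos h]
      exact f.injective h.choose_spec
    have hφn : ∀ x, x ∉ Set.range f → φ x = (L x).out.1 := by
      intro x hx
      have h : ¬ ∃ b, f b = x := hx
      simp only [φ, dif_neg h]
    have hφm : ∀ x, x ∉ Set.range f → φ x ∈ L x := by
      intro x hx
      rw [hφn x hx]
      exact Sym2.out_fst_mem _
    have hfib : ∀ x, ∃ q : G.Walk x (f (φ x)), ∀ y ∈ q.support, φ y = φ x := by
      intro x
      by_cases hx : x ∈ Set.range f
      · obtain ⟨a, rfl⟩ := hx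
        rw [hφf a]
        exact ⟨Walk.nil, by simp [hφf]⟩
      · obtain ⟨u, v, h, hs⟩ := (hcov x).resolve_left hx
        have hLx := hL x hx u v h hs
        have hm := hφm x hx
        obtain ⟨d, h', hs'⟩ : ∃ (d : U) (h' : H.Adj (φ x) d), x ∈ (p h').support := by
          rw [hLx, Sym2.mem_iff] at hm
          rcases hm with hm | hm
          · rw [hm]; exact ⟨v, h, hs⟩
          · rw [hm]; exact ⟨u, h.symm, (same h h.symm Sym2.eq_swap).1 x hs⟩
        refine ⟨((p h').takeUntil x hs').reverse, fun y hy => ?_⟩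
        rw [Walk.support_reverse, List.mem_reverse] at hy
        have hy' := (p h').support_takeUntil_subset_support hs' hy
        by_cases hyr : y ∈ Set.range f
        · obtain ⟨w, rfl⟩ := hyr
          rw [hφf]
          rcases hbr h' w hy' with hw | rfl
          · exact hw
          · exfalso
            exact Walk.endpoint_notMem_support_takeUntil (hpath h') hs'
              (fun he => hx ⟨_, he⟩) hy
        · rw [hφn y hyr, hφn x hx, hL y hyr _ _ h' hy', hL x hx _ _ h' hs']
    have hadj' : ∀ a b, H.Adj a b → ∃ x y, φ x = a ∧ φ y = b ∧ G.Adj x y := by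
      intro a b h
      obtain ⟨d, hd, hd1, hd2⟩ := (p h).exists_boundary_dart (φ ⁻¹' {a}) (by simp [hφf])
        (by simp [hφf, h.ne'])
      refine ⟨d.fst, d.snd, hd1, ?_, d.adj⟩
      have hs : d.snd ∈ (p h).support := (p h).dart_snd_mem_support_of_mem_darts hd
      by_cases hr : d.snd ∈ Set.range f
      · obtain ⟨w, hw⟩ := hr
        rw [← hw] at hs hd2 ⊢
        rw [hφf]
        rw [Set.mem_preimage, hφf] at hd2
        exact (hbr h w hs).resolve_left hd2
      · have := hφm _ hr
        rw [hL _ hr _ _ h hs, Sym2.mem_iff] at this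
        exact this.resolve_left hd2
    intro hp
    exact hHap.1 ⟨fun hm => hp.1 (isMinor_of_contraction f φ hφf hfib hadj' hm),
      fun hm => hp.2 (isMinor_of_contraction f φ hφf hfib hadj' hm)⟩
  intro x0 y0 hxy0
  obtain ⟨u, v, h, he⟩ := hedge' hxy0
  by_cases hD : s(u, v) ∈ Dset H
  · -- deletion
    left
    obtain ⟨S₁, S₂, hu1, hv2, hdis, hs1, hs2, hE⟩ := path_split (p h) (hpath h) _ he
    rw [Set.disjoint_left] at hdis
    let A : V → Set U := fun x => {a | (∃ (c d : U) (h' : H.Adj c d), s(c, d) ≠ s(u, v) ∧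
      x ∈ (p h').support ∧ (a = c ∨ a = d)) ∨ (a = u ∧ x ∈ S₁) ∨ (a = v ∧ x ∈ S₂)}
    -- every remaining edge lies on another path, in `S₁`, or in `S₂`
    have hcase : ∀ {x y}, (G.deleteEdges {s(x0, y0)}).Adj x y →
        (∃ (c d : U) (h' : H.Adj c d), s(c, d) ≠ s(u, v) ∧ s(x, y) ∈ (p h').edges) ∨
        (s(x, y) ∈ (p h).edges ∧ x ∈ S₁ ∧ y ∈ S₁) ∨
        (s(x, y) ∈ (p h).edges ∧ x ∈ S₂ ∧ y ∈ S₂) := by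
      intro x y hxy
      rw [deleteEdges_adj] at hxy
      obtain ⟨c, d, h', he'⟩ := hedge' hxy.1
      by_cases hcd : s(c, d) = s(u, v)
      · have he2 := (same h' h hcd).2 _ he'
        rcases hE x y he2 hxy.2 with h1 | h1
        · exact Or.inr (Or.inl ⟨he2, h1⟩)
        · exact Or.inr (Or.inr ⟨he2, h1⟩)
      · exact Or.inl ⟨c, d, h', hcd, he'⟩
    have hf1 : ∀ {a}, f a ∈ S₁ → a = u := by
      intro a ha
      rcases hbr h a (hs1 ha) with rfl | rfl
      · rfl
      · exact absurd hv2 (hdis ha)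
    have hf2 : ∀ {a}, f a ∈ S₂ → a = v := by
      intro a ha
      rcases hbr h a (hs2 ha) with rfl | rfl
      · exact absurd ha (hdis hu1)
      · rfl
    -- the value of `A`
    have hA0 : ∀ {x} {c d : U} (h' : H.Adj c d), x ∉ Set.range f → s(c, d) ≠ s(u, v) →
        x ∈ (p h').support → A x = {a | a ∈ s(c, d)} := by
      intro x c d h' hx hne hs
      ext a
      simp only [A, Set.mem_ofPred_eq]
      constructor
      · rintro (⟨c', d', h'', hne', hs', ha⟩ | ⟨-, ha⟩ | ⟨-, ha⟩)
        · rw [uniq h' h'' hx hs hs', Sym2.mem_iff]; exact ha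
        · exact absurd (uniq h' h hx hs (hs1 ha)) hne
        · exact absurd (uniq h' h hx hs (hs2 ha)) hne
      · intro ha
        exact Or.inl ⟨c, d, h', hne, hs, Sym2.mem_iff.1 ha⟩
    have hA1 : ∀ {x}, x ∉ Set.range f → x ∈ S₁ → A x = {u} := by
      intro x hx hs
      ext a
      simp only [A, Set.mem_ofPred_eq, Set.mem_singleton_iff]
      constructor
      · rintro (⟨c', d', h'', hne', hs', ha⟩ | ⟨ha, -⟩ | ⟨-, ha⟩)
        · exact absurd (uniq h'' h hx hs' (hs1 hs)) hne'
        · exact ha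
        · exact absurd ha (hdis hs)
      · exact fun ha => Or.inr (Or.inl ⟨ha, hs⟩)
    have hA2 : ∀ {x}, x ∉ Set.range f → x ∈ S₂ → A x = {v} := by
      intro x hx hs
      ext a
      simp only [A, Set.mem_ofPred_eq, Set.mem_singleton_iff]
      constructor
      · rintro (⟨c', d', h'', hne', hs', ha⟩ | ⟨-, ha⟩ | ⟨ha, -⟩)
        · exact absurd (uniq h'' h hx hs' (hs2 hs)) hne'
        · exact absurd hs (hdis ha)
        · exact ha
      · exact fun ha => Or.inr (Or.inr ⟨ha, hs⟩)
    refine Red.planar (H := H.deleteEdges {s(u, v)}) (f := f) (A := A) ?_ (DegTwo.thin ?_) hD.2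
    · refine ⟨?_, ?_, ?_, ?_⟩
      · intro a b hab
        rcases hcase hab with ⟨c, d, h', hne, he'⟩ | ⟨-, h1, h2⟩ | ⟨-, h1, h2⟩
        · have := hbr2 h' he'
          rw [deleteEdges_adj]
          refine ⟨?_, by rw [this]; exact hne⟩
          rw [← mem_edgeSet, this]
          exact h'
        · exact absurd (congrArg f ((hf1 h1).trans (hf1 h2).symm)) hab.ne
        · exact absurd (congrArg f ((hf2 h1).trans (hf2 h2).symm)) hab.ne
      · intro x a hx hxa
        rcases hcase hxa with ⟨c, d, h', hne, he'⟩ | ⟨-, h1, h2⟩ | ⟨-, h1, h2⟩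
        · exact Or.inl ⟨c, d, h', hne, (p h').fst_mem_support_of_mem_edges he',
            hbr h' a ((p h').snd_mem_support_of_mem_edges he')⟩
        · exact Or.inr (Or.inl ⟨hf1 h2, h1⟩)
        · exact Or.inr (Or.inr ⟨hf2 h2, h1⟩)
      · intro x y hx hy hxy
        rcases hcase hxy with ⟨c, d, h', hne, he'⟩ | ⟨-, h1, h2⟩ | ⟨-, h1, h2⟩
        · rw [hA0 h' hx hne ((p h').fst_mem_support_of_mem_edges he'),
            hA0 h' hy hne ((p h').snd_mem_support_of_mem_edges he')]
        · rw [hA1 hx h1, hA1 hy h2]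
        · rw [hA2 hx h1, hA2 hy h2]
      · intro x a b hx ha hb
        have ha' := ha
        rcases ha with ⟨c, d, h', hne, hs, -⟩ | ⟨-, h1⟩ | ⟨-, h1⟩
        · rw [hA0 h' hx hne hs] at ha' hb
          simp only [Set.mem_ofPred_eq] at ha' hb
          by_cases hab : a = b
          · exact Or.inl hab
          · right
            have hse : s(c, d) = s(a, b) := ((Sym2.mem_and_mem_iff hab).1 ⟨ha', hb⟩)
            rw [deleteEdges_adj]
            refine ⟨?_, by rw [← hse]; exact hne⟩
            rw [← mem_edgeSet, ← hse]
            exact h'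
        · rw [hA1 hx h1] at ha' hb
          exact Or.inl (ha'.trans hb.symm)
        · rw [hA2 hx h1] at ha' hb
          exact Or.inl (ha'.trans hb.symm)
    · intro x hx
      obtain ⟨r, t, hrt⟩ := hdeg x hx
      exact ⟨r, t, fun y hy => hrt y hy.1⟩
  · -- contraction
    right
    have R : Red G H f (fun x => {a | ∃ (c d : U) (h' : H.Adj c d),
        x ∈ (p h').support ∧ a ∈ s(c, d)}) := by
      have hA : ∀ {x} {c d : U} (h' : H.Adj c d), x ∉ Set.range f → x ∈ (p h').support →
          {a | ∃ (c d : U) (h' : H.Adj c d), x ∈ (p h').support ∧ a ∈ s(c, d)}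
            = {a | a ∈ s(c, d)} := by
        intro x c d h' hx hs
        ext a
        constructor
        · rintro ⟨c', d', h'', hs', ha⟩
          rw [uniq h'' h' hx hs' hs] at ha
          exact ha
        · exact fun ha => ⟨c, d, h', hs, ha⟩
      refine ⟨?_, ?_, ?_, ?_⟩
      · intro a b hab
        obtain ⟨c, d, h', he'⟩ := hedge' hab
        rw [← mem_edgeSet, hbr2 h' he']
        exact h'
      · intro x a hx hxa
        obtain ⟨c, d, h', he'⟩ := hedge' hxa
        exact ⟨c, d, h', (p h').fst_mem_support_of_mem_edges he',
          Sym2.mem_iff.2 (hbr h' a ((p h').snd_mem_support_of_mem_edges he'))⟩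
      · intro x y hx hy hxy
        obtain ⟨c, d, h', he'⟩ := hedge' hxy
        beta_reduce
        rw [hA h' hx ((p h').fst_mem_support_of_mem_edges he'),
          hA h' hy ((p h').snd_mem_support_of_mem_edges he')]
      · intro x a b hx ha hb
        obtain ⟨c, d, h', hs, ha'⟩ := ha
        beta_reduce at hb
        rw [hA h' hx hs] at hb
        by_cases hab : a = b
        · exact Or.inl hab
        · right
          have hse : s(c, d) = s(a, b) := ((Sym2.mem_and_mem_iff hab).1 ⟨ha', hb⟩)
          rw [← mem_edgeSet, ← hse]
          exact h'
    have hxy : s(x0, y0) = s(f u, f v) := edge_of_length_one (p h) (hlen h hD) he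
    have fin : ∀ {a b : U}, H.Adj a b → s(a, b) ∉ Dset H →
        Planar (contractEdge G (f a) (f b)) := by
      intro a b hab hn
      have hp := (hHap.2 hab).resolve_left (fun hd => hn ⟨hab, hd⟩)
      exact (R.contract hab.ne).planar (hdeg.contract a b).thin hp
    rw [Sym2.eq_iff] at hxy
    rcases hxy with ⟨rfl, rfl⟩ | ⟨rfl, rfl⟩
    · exact fin h hD
    · exact fin h.symm (by rwa [Sym2.eq_swap])

/-- If `H` is 3-connected and almost-planar and `G` is obtained from `H` by repeatedly
subdividing edges of `D(H)`, then `G` is almost-planar, and so is any graph obtained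
from `G` by adding isolated vertices. -/
theorem stmt12 {U V : Type} [Fintype U] [Fintype V] (H : SimpleGraph U) (G : SimpleGraph V)
    (hH3 : KConnected H 3) (hHap : AlmostPlanar H)
    (hsub : IsSubdivisionWithin G H (Dset H)) :
    AlmostPlanar G ∧
    ∀ (V₂ : Type) (G₂ : SimpleGraph V₂), AddIsolated G₂ G → AlmostPlanar G₂ := by
  have h := almostPlanar_of_subdivision H G hHap hsub
  exact ⟨h, fun V₂ G₂ hi => h.addIsolated hi⟩
end

section
/- Every connected nonplanar graph with no minor isomorphic to K5+ or K33+ is 2-connected. -/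
open SimpleGraph

/-- A property preserved along edges is constant on a connected graph. -/
lemma const_of_reachable {V : Type*} {G : SimpleGraph V} (P : V → Prop)
    (h : ∀ x y, G.Adj x y → (P x ↔ P y)) {a b : V} (hr : G.Reachable a b) : P a ↔ P b := by
  obtain ⟨p⟩ := hr
  induction p with
  | nil => rfl
  | cons hadj _ ih => exact (h _ _ hadj).trans ih

lemma connected_image {V : Type*} {G : SimpleGraph V} (f : V → V)
    (hf : ∀ x y, G.Adj x y → G.Adj (f x) (f y) ∨ f x = f y) {S : Set V}
    (hS : (G.induce S).Connected) : (G.induce (f '' S)).Connected := by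
  have key : ∀ a b : S, (G.induce S).Reachable a b →
      (G.induce (f '' S)).Reachable ⟨f a, a, a.2, rfl⟩ ⟨f b, b, b.2, rfl⟩ := by
    rintro a b ⟨p⟩
    induction p with
    | nil => exact Reachable.refl _
    | @cons u w _ hadj _ ih =>
      refine Reachable.trans ?_ ih
      rcases hf u w hadj with h | h
      · exact Adj.reachable (by simpa using h)
      · have : (⟨f u, u, u.2, rfl⟩ : (f '' S : Set V)) = ⟨f w, w, w.2, rfl⟩ := Subtype.ext h
        rw [this]
  obtain ⟨⟨s, hs⟩⟩ := hS.nonempty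
  have : Nonempty (f '' S : Set V) := ⟨⟨f s, s, hs, rfl⟩⟩
  refine ⟨?_⟩
  rintro ⟨_, a, ha, rfl⟩ ⟨_, b, hb, rfl⟩
  exact key ⟨a, ha⟩ ⟨b, hb⟩ (hS.preconnected _ _)

def IsModel {W V : Type*} (H : SimpleGraph W) (G : SimpleGraph V) (B : W → Set V) : Prop :=
    (∀ w, (B w).Nonempty) ∧
    (∀ w, (G.induce (B w)).Connected) ∧
    (Pairwise fun w₁ w₂ => Disjoint (B w₁) (B w₂)) ∧
    (∀ ⦃w₁ w₂ : W⦄, H.Adj w₁ w₂ → ∃ v₁ ∈ B w₁, ∃ v₂ ∈ B w₂, G.Adj v₁ v₂)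

lemma pendant_of_not_spanning {W V : Type*} [Nonempty W] {H : SimpleGraph W} {G : SimpleGraph V}
    (hG : G.Connected) {B : W → Set V} (hB : IsModel H G B) {c : V} (hc : ∀ w, c ∉ B w) :
    ∃ w₀, ∃ x ∈ B w₀, ∃ y, G.Adj x y ∧ ∀ w, y ∉ B w := by
  by_contra! hcon
  obtain ⟨w⟩ := ‹Nonempty W›
  obtain ⟨x, hx⟩ := hB.1 w
  have := const_of_reachable (G := G) (fun z => ∃ w, z ∈ B w)
    (fun a b hab => ⟨fun ⟨w, hw⟩ => hcon w a hw b hab, fun ⟨w, hw⟩ => hcon w b hw a hab.symm⟩)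
    (hG.preconnected x c)
  obtain ⟨w', hw'⟩ := this.1 ⟨w, hx⟩
  exact hc w' hw'

lemma shrink {W V : Type*} {H : SimpleGraph W} {G : SimpleGraph V} {B : W → Set V}
    (hB : IsModel H G B) (A C : Set V) (v : V) (hvC : v ∉ C)
    (hAC : Disjoint A C) (hcov : ∀ x, x = v ∨ x ∈ A ∨ x ∈ C)
    (hno : ∀ x ∈ A, ∀ y ∈ C, ¬ G.Adj x y) (w₀ : W) (hv : v ∈ B w₀)
    (hA : ∀ w, w ≠ w₀ → B w ⊆ A) {c : V} (hc : c ∈ C) :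
    ∃ B', IsModel H G B' ∧ ∀ w, c ∉ B' w := by
  classical
  let f : V → V := fun x => if x ∈ C then v else x
  have hfC : ∀ x ∈ C, f x = v := fun x hx => if_pos hx
  have hfN : ∀ x, x ∉ C → f x = x := fun x hx => if_neg hx
  have hf : ∀ x y, G.Adj x y → G.Adj (f x) (f y) ∨ f x = f y := by
    intro x y hxy
    by_cases hx : x ∈ C <;> by_cases hy : y ∈ C
    · right; rw [hfC x hx, hfC y hy]
    · rcases hcov y with rfl | h | h
      · right; rw [hfC x hx, hfN y hy]
      · exact absurd hxy.symm (hno y h x hx)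
      · exact absurd h hy
    · rcases hcov x with rfl | h | h
      · right; rw [hfC y hy, hfN x hx]
      · exact absurd hxy (hno x h y hy)
      · exact absurd h hx
    · left; rwa [hfN x hx, hfN y hy]
  have hsub : ∀ w, f '' B w ⊆ B w := by
    rintro w _ ⟨x, hx, rfl⟩
    by_cases hxC : x ∈ C
    · rw [hfC x hxC]
      by_cases hw : w = w₀
      · rwa [hw]
      · exact absurd hxC (Set.disjoint_left.1 hAC (hA w hw hx))
    · rwa [hfN x hxC]
  have hdis : Pairwise fun w₁ w₂ => Disjoint (f '' B w₁) (f '' B w₂) :=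
    fun w₁ w₂ hne => (hB.2.2.1 hne).mono (hsub _) (hsub _)
  refine ⟨fun w => f '' B w, ⟨fun w => (hB.1 w).image f, fun w => connected_image f hf (hB.2.1 w),
    hdis, ?_⟩, ?_⟩
  · intro w₁ w₂ hadj
    obtain ⟨x, hx, y, hy, hxy⟩ := hB.2.2.2 hadj
    refine ⟨f x, ⟨x, hx, rfl⟩, f y, ⟨y, hy, rfl⟩, ?_⟩
    rcases hf x y hxy with h | h
    · exact h
    · exact absurd (⟨y, hy, h.symm⟩ : f x ∈ f '' B w₂)
        (Set.disjoint_left.1 (hdis hadj.ne) ⟨x, hx, rfl⟩)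
  · rintro w ⟨x, hx, hxc⟩
    by_cases hxC : x ∈ C
    · rw [hfC x hxC] at hxc; exact hvC (hxc ▸ hc)
    · rw [hfN x hxC] at hxc; exact hxC (hxc ▸ hc)

lemma exists_pendant {W V : Type*} [Nontrivial W] {H : SimpleGraph W} {G : SimpleGraph V}
    (hH : ∀ w₀ w w' : W, w ≠ w₀ → w' ≠ w₀ → H.Adj w w' ∨ ∃ u, u ≠ w₀ ∧ H.Adj w u ∧ H.Adj u w')
    (hG : G.Connected) {B : W → Set V} (hB : IsModel H G B) {v : V}
    (hv : ¬ (G.induce ({v}ᶜ : Set V)).Connected) :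
    ∃ B', IsModel H G B' ∧ ∃ w₀, ∃ x ∈ B' w₀, ∃ y, G.Adj x y ∧ ∀ w, y ∉ B' w := by
  suffices h : ∃ B', IsModel H G B' ∧ ∃ c, ∀ w, c ∉ B' w by
    obtain ⟨B', hB', c, hc⟩ := h
    exact ⟨B', hB', pendant_of_not_spanning hG hB' hc⟩
  by_cases hspan : ∃ c, ∀ w, c ∉ B w
  · exact ⟨B, hB, hspan⟩
  push Not at hspan
  obtain ⟨w₀, hw₀⟩ := hspan v
  have hnv : ∀ w, w ≠ w₀ → v ∉ B w := fun w hw h =>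
    Set.disjoint_left.1 (hB.2.2.1 hw) h hw₀
  obtain ⟨w₁, hw₁⟩ := exists_ne w₀
  obtain ⟨x₁, hx₁⟩ := hB.1 w₁
  have hx₁v : x₁ ≠ v := fun h => hnv w₁ hw₁ (h ▸ hx₁)
  -- the side containing `x₁`
  let A : Set V := {z | ∃ hz : z ≠ v, (G.induce ({v}ᶜ : Set V)).Reachable ⟨x₁, hx₁v⟩ ⟨z, hz⟩}
  have hstep : ∀ a b, a ≠ v → b ≠ v → G.Adj a b → (a ∈ A ↔ b ∈ A) := by
    intro a b ha hb hab
    have hadj : (G.induce ({v}ᶜ : Set V)).Adj ⟨a, ha⟩ ⟨b, hb⟩ := by simpa using hab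
    exact ⟨fun ⟨_, h⟩ => ⟨hb, h.trans hadj.reachable⟩,
      fun ⟨_, h⟩ => ⟨ha, h.trans hadj.symm.reachable⟩⟩
  have hx₁A : x₁ ∈ A := ⟨hx₁v, Reachable.refl _⟩
  have hcC : ∃ c, c ≠ v ∧ c ∉ A := by
    by_contra! hall
    apply hv
    have : Nonempty ({v}ᶜ : Set V) := ⟨⟨x₁, hx₁v⟩⟩
    refine ⟨?_⟩
    rintro ⟨a, ha⟩ ⟨b, hb⟩
    obtain ⟨_, h1⟩ := hall a ha
    obtain ⟨_, h2⟩ := hall b hb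
    exact h1.symm.trans h2
  obtain ⟨c, hcv, hcA⟩ := hcC
  have hconst : ∀ w, w ≠ w₀ → ∀ a ∈ B w, ∀ b ∈ B w, (a ∈ A ↔ b ∈ A) := by
    intro w hw a ha b hb
    exact const_of_reachable (G := G.induce (B w)) (fun z => z.1 ∈ A)
      (fun x y hxy => hstep x y (fun h => hnv w hw (h ▸ x.2)) (fun h => hnv w hw (h ▸ y.2)) hxy)
      ((hB.2.1 w).preconnected ⟨a, ha⟩ ⟨b, hb⟩)
  have hedge : ∀ w w', w ≠ w₀ → w' ≠ w₀ → H.Adj w w' → B w ⊆ A → B w' ⊆ A := by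
    intro w w' hw hw' hadj hsub y hy
    obtain ⟨a, ha, b, hb, hab⟩ := hB.2.2.2 hadj
    have hbA := (hstep a b (fun h => hnv w hw (h ▸ ha)) (fun h => hnv w' hw' (h ▸ hb)) hab).1
      (hsub ha)
    exact (hconst w' hw' b hb y hy).1 hbA
  have h1 : B w₁ ⊆ A := fun y hy => (hconst w₁ hw₁ x₁ hx₁ y hy).1 hx₁A
  have hall : ∀ w, w ≠ w₀ → B w ⊆ A := by
    intro w hw
    rcases hH w₀ w₁ w hw₁ hw with h | ⟨u, hu, hu1, hu2⟩
    · exact hedge _ _ hw₁ hw h h1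
    · exact hedge _ _ hu hw hu2 (hedge _ _ hw₁ hu hu1 h1)
  obtain ⟨B', hB', hc'⟩ := shrink hB A {z | z ≠ v ∧ z ∉ A} v (fun h => h.1 rfl)
    (Set.disjoint_left.2 fun z hz h => h.2 hz)
    (fun x => by
      by_cases hx : x = v
      · exact Or.inl hx
      · by_cases hxA : x ∈ A
        · exact Or.inr (Or.inl hxA)
        · exact Or.inr (Or.inr ⟨hx, hxA⟩))
    (fun x hx y hy hxy => hy.2 ((hstep x y hx.1 hy.1 hxy).1 hx)) w₀ hw₀ hall
    (c := c) ⟨hcv, hcA⟩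
  exact ⟨B', hB', c, hc'⟩

lemma plus_minor {W V : Type*} {H : SimpleGraph W} {G : SimpleGraph V}
    {Hp : SimpleGraph (Option W)} {z : W}
    (hp : ∀ a b, Hp.Adj (some a) (some b) → H.Adj a b)
    (hpn : ∀ a, Hp.Adj none (some a) → a = z)
    (haut : ∀ w₀, ∃ σ : W → W, σ.Injective ∧ (∀ a b, H.Adj a b → H.Adj (σ a) (σ b)) ∧ σ z = w₀)
    (h : ∃ B', IsModel H G B' ∧ ∃ w₀, ∃ x ∈ B' w₀, ∃ y, G.Adj x y ∧ ∀ w, y ∉ B' w) :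
    IsMinor Hp G := by
  obtain ⟨B, hB, w₀, x, hx, y, hxy, hy⟩ := h
  obtain ⟨σ, hinj, hσ, hz⟩ := haut w₀
  refine ⟨fun o => o.elim {y} (fun w => B (σ w)), ?_, ?_, ?_, ?_⟩
  · rintro (_ | w)
    · exact Set.singleton_nonempty y
    · exact hB.1 _
  · rintro (_ | w)
    · change (G.induce {y}).Connected
      have : Nonempty ({y} : Set V) := ⟨⟨y, rfl⟩⟩
      refine ⟨?_⟩
      rintro ⟨a, rfl⟩ ⟨b, rfl⟩
      exact Reachable.refl _
    · exact hB.2.1 _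
  · rintro (_ | a) (_ | b) hne
    · exact absurd rfl hne
    · exact Set.disjoint_singleton_left.2 (hy _)
    · exact Set.disjoint_singleton_right.2 (hy _)
    · exact hB.2.2.1 (fun h => hne (congrArg some (hinj h)))
  · rintro (_ | a) (_ | b) hadj
    · exact absurd rfl hadj.ne
    · obtain rfl := hpn b hadj
      exact ⟨y, rfl, x, by simpa [hz] using hx, hxy.symm⟩
    · obtain rfl := hpn a hadj.symm
      exact ⟨x, by simpa [hz] using hx, y, rfl, hxy⟩
    · exact hB.2.2.2 (hσ _ _ (hp a b hadj))

lemma card_of_model {W V : Type*} [Fintype W] [Fintype V] {H : SimpleGraph W} {G : SimpleGraph V}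
    {B : W → Set V} (hB : IsModel H G B) (hW : 3 ≤ Fintype.card W) : 3 ≤ Nat.card V := by
  choose g hg using hB.1
  have hinj : Function.Injective g := by
    intro a b hab
    by_contra hne
    exact Set.disjoint_left.1 (hB.2.2.1 hne) (hg a) (hab ▸ hg b)
  rw [Nat.card_eq_fintype_card]
  exact hW.trans (Fintype.card_le_of_injective g hinj)

lemma K5_link : ∀ w₀ w w' : Fin 5, w ≠ w₀ → w' ≠ w₀ →
    K5.Adj w w' ∨ ∃ u, u ≠ w₀ ∧ K5.Adj w u ∧ K5.Adj u w' := by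
  simp only [K5, top_adj]; decide

lemma K33_link : ∀ w₀ w w' : Fin 3 ⊕ Fin 3, w ≠ w₀ → w' ≠ w₀ →
    K33.Adj w w' ∨ ∃ u, u ≠ w₀ ∧ K33.Adj w u ∧ K33.Adj u w' := by
  simp only [K33, completeBipartiteGraph_adj]; decide

lemma K5_aut : ∀ w₀ : Fin 5, ∃ σ : Fin 5 → Fin 5, σ.Injective ∧
    (∀ a b, K5.Adj a b → K5.Adj (σ a) (σ b)) ∧ σ 0 = w₀ := fun w₀ =>
  ⟨Equiv.swap 0 w₀, (Equiv.swap 0 w₀).injective,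
    fun _ _ h => (Equiv.swap 0 w₀).injective.ne h, Equiv.swap_apply_left _ _⟩

lemma K33_aut : ∀ w₀ : Fin 3 ⊕ Fin 3, ∃ σ : Fin 3 ⊕ Fin 3 → Fin 3 ⊕ Fin 3, σ.Injective ∧
    (∀ a b, K33.Adj a b → K33.Adj (σ a) (σ b)) ∧ σ (Sum.inl 0) = w₀ := by
  rintro (i | i)
  · refine ⟨Sum.map (Equiv.swap 0 i) id, Sum.map_injective.2
      ⟨(Equiv.swap 0 i).injective, Function.injective_id⟩, ?_, by simp⟩
    rintro (a | a) (b | b) <;> simp [K33]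
  · refine ⟨Sum.swap ∘ Sum.map (Equiv.swap 0 i) id, Sum.swap_leftInverse.injective.comp
      (Sum.map_injective.2 ⟨(Equiv.swap 0 i).injective, Function.injective_id⟩), ?_, by simp⟩
    rintro (a | a) (b | b) <;> simp [K33]

/-- Every connected nonplanar {K5+, K33+}-free graph is 2-connected
(connected, at least 3 vertices, and no cut vertex). -/
theorem stmt15 {V : Type} [Fintype V] (G : SimpleGraph V) (hconn : G.Connected)
    (hnp : ¬ Planar G) (hfree : ¬ IsMinor K5plus G ∧ ¬ IsMinor K33plus G) :
    G.Connected ∧ 3 ≤ Nat.card V ∧ ∀ v : V, (G.induce ({v}ᶜ : Set V)).Connected := by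
  have h : IsMinor K5 G ∨ IsMinor K33 G := by
    by_contra hcon
    exact hnp (not_or.1 hcon)
  refine ⟨hconn, ?_⟩
  rcases h with ⟨B, hB⟩ | ⟨B, hB⟩
  · refine ⟨card_of_model (H := K5) (G := G) hB (by simp), fun v => ?_⟩
    by_contra hv
    refine hfree.1 (plus_minor (z := 0) ?_ ?_ K5_aut (exists_pendant K5_link hconn hB hv))
    · intro a b hab
      exact fun h => hab.ne (congrArg some h)
    · intro a ha
      simpa [K5plus] using ha
  · refine ⟨card_of_model (H := K33) (G := G) hB (by simp), fun v => ?_⟩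
    by_contra hv
    have : Nontrivial (Fin 3 ⊕ Fin 3) := ⟨Sum.inl 0, Sum.inr 0, by simp⟩
    refine hfree.2 (plus_minor (z := Sum.inl 0) ?_ ?_ K33_aut
      (exists_pendant K33_link hconn hB hv))
    · rintro (a | a) (b | b) hab <;> simp_all [K33plus, K33]
    · intro a ha
      simpa [K33plus] using ha
end
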